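/- arXiv:2404.19727 — 4 statements merged into one kernel-verified Lean document; each statement's English description precedes it below -/
import Mathlib

section
/- Distribution of K for Pauli-Z circuits: the set Ω of distinct rows of 𝐊 equals 𝟏 − 2·row_{ℤ2}(A), where row_{ℤ2}(A) is the row space of A over the field ℤ/2 (viewed as 0/1 integer vectors); Ω has cardinality 2^r with r = rank of A over ℤ/2; each element of Ω occurs exactly 2^{n−r} times as a row of 𝐊; and consequently K is uniformly distributed on Ω, i.e., ℙ(K = k) = 2^{−r} for every k ∈ Ω. -/
/-!
Reading `x` as a bit vector `b ∈ 𝔽₂ⁿ` is a bijection (`bitsEquiv`), and since `(−1)^s = 1 − 2 (s mod 2)`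
the row `k_x` is `φ (b A)`, where `φ v = 𝟏 − 2v` is injective on 0/1 vectors (`pauliK_row`). So up to
the bijection `bitsEquiv` and the injection `φ`, the map `x ↦ k_x` is the linear map `b ↦ b A`, whose
range is the row space, of dimension `r`, and whose nonempty fibres are cosets of its kernel, of
dimension `n − r` by rank–nullity.
-/

open Matrix Finset MeasureTheory

/-- The `m`-th bit of the binary expansion of `x ∈ {0,…,2^n−1}`; the rows of the matrix `𝒰`
enumerating all binary `n`-tuples are `x ↦ (bin n x ·)`. -/
def bin (n : ℕ) (x : Fin (2 ^ n)) (m : Fin n) : ℕ := (x : ℕ) / 2 ^ (m : ℕ) % 2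

/-- The `(x,j)` entry of the eigenvalue matrix `𝐊`: the `x`-th diagonal entry of
`H_j = O₁⁽ʲ⁾ ⊗ ⋯ ⊗ O_n⁽ʲ⁾`, where `O_m⁽ʲ⁾ = Z` if `A m j = 1` and `I₂` otherwise, is
`(−1)^{Σ_m x_m·A_{m,j}}`. -/
def pauliK (n N : ℕ) (A : Matrix (Fin n) (Fin N) (ZMod 2)) (x : Fin (2 ^ n)) (j : Fin N) : ℤ :=
  (-1) ^ (∑ m, bin n x m * (A m j).val)

/-- The Sylvester Hadamard matrix entry `H_{2^n}[x,y] = (−1)^{⟨x,y⟩}` with the mod-2 inner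
product of the binary expansions. -/
def sylvester (n : ℕ) (x y : Fin (2 ^ n)) : ℤ := (-1) ^ (∑ m, bin n x m * bin n y m)

/-- The bijection between `{0,…,2^n−1}` and `𝔽₂ⁿ` given by binary digits, least significant first;
it relies on `ZMod 2` being definitionally `Fin 2`. -/
def bitsEquiv (n : ℕ) : Fin (2 ^ n) ≃ (Fin n → ZMod 2) :=
  (finFunctionFinEquiv (m := 2) (n := n)).symm

lemma bitsEquiv_val (n : ℕ) (x : Fin (2 ^ n)) (m : Fin n) :
    (bitsEquiv n x m).val = bin n x m := rfl

/-- The map `v ↦ 𝟏 − 2v` from `𝔽₂`-vectors, viewed as 0/1 integer vectors, to sign vectors. -/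
def signVec (N : ℕ) (v : Fin N → ZMod 2) : Fin N → ℤ := fun j => 1 - 2 * ((v j).val : ℤ)

lemma signVec_injective (N : ℕ) : Function.Injective (signVec N) := by
  intro v w h
  funext j
  have hj := congrFun h j
  simp only [signVec] at hj
  exact ZMod.val_injective 2 (by omega)

lemma neg_one_pow_eq_one_sub (s : ℕ) : (-1 : ℤ) ^ s = 1 - 2 * (((s : ZMod 2)).val : ℤ) := by
  rw [ZMod.val_natCast, neg_one_pow_eq_pow_mod_two]
  rcases Nat.mod_two_eq_zero_or_one s with h | h <;> simp [h]

/-- Row `x` of the eigenvalue matrix is the sign vector of the combination of the rows of `A`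
selected by the bits of `x`. -/
lemma pauliK_row (n N : ℕ) (A : Matrix (Fin n) (Fin N) (ZMod 2)) (x : Fin (2 ^ n)) :
    (fun j => pauliK n N A x j) = signVec N (A.vecMulLinear (bitsEquiv n x)) := by
  funext j
  simp only [pauliK, signVec, neg_one_pow_eq_one_sub, Matrix.vecMulLinear_apply, Matrix.vecMul,
    dotProduct, Nat.cast_sum, Nat.cast_mul, ← bitsEquiv_val, ZMod.natCast_zmod_val]

lemma finrank_range_vecMulLinear (n N : ℕ) (A : Matrix (Fin n) (Fin N) (ZMod 2)) :
    Module.finrank (ZMod 2) (LinearMap.range A.vecMulLinear) = A.rank := by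
  rw [range_vecMulLinear, Matrix.rank_eq_finrank_span_row]

/-- Every nonempty fibre of `v ↦ v A` is a coset of its kernel, hence has `2^(n − r)` elements. -/
lemma card_fibre_vecMulLinear (n N : ℕ) (A : Matrix (Fin n) (Fin N) (ZMod 2))
    (u : Fin n → ZMod 2) :
    (Finset.univ.filter fun v => A.vecMulLinear v = A.vecMulLinear u).card
      = 2 ^ (n - A.rank) := by
  have h := AddMonoidHom.card_fiber_eq_of_mem_range A.vecMulLinear.toAddMonoidHom
    (x := A.vecMulLinear u) (y := 0) ⟨u, rfl⟩ ⟨0, map_zero _⟩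
  refine (show _ = _ from h).trans ?_
  have hk := Module.natCard_eq_pow_finrank (K := ZMod 2) (V := LinearMap.ker A.vecMulLinear)
  have hr := A.vecMulLinear.finrank_range_add_finrank_ker
  rw [finrank_range_vecMulLinear, Module.finrank_fin_fun] at hr
  have he : n - A.rank = Module.finrank (ZMod 2) (LinearMap.ker A.vecMulLinear) := by omega
  rw [Nat.card_zmod] at hk
  rw [he]
  rw [← hk]
  exact (Nat.subtype_card _ fun v => by
    rw [Finset.mem_filter]; simp [LinearMap.mem_ker]).symm

/-- distribution of `K` for Pauli-Z circuits.  The set `Ω` of distinct rows of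
`𝐊` equals `𝟏 − 2·row_{ℤ2}(A)` (row space over `ℤ/2` viewed as 0/1 integer vectors), it has
cardinality `2^r` with `r = rank_{ℤ2}(A)`, each element of `Ω` occurs exactly `2^{n−r}` times
as a row of `𝐊`, and `K` (the row `k_X` for `X` uniform) is uniform on `Ω`:
`ℙ(K = κ) = #{x : k_x = κ}/2^n = 2^{−r}`. -/
theorem stmt_10 (n N : ℕ) (hn : 1 ≤ n) (hnN : n ≤ N) (hN : N ≤ 2 ^ n - 1)
    (A : Matrix (Fin n) (Fin N) (ZMod 2))
    (hinj : Function.Injective (fun j : Fin N => fun m => A m j))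
    (hnz : ∀ j : Fin N, (fun m => A m j) ≠ 0) :
    (Set.range (fun x : Fin (2 ^ n) => fun j => pauliK n N A x j) =
      (fun v : Fin N → ZMod 2 => fun j => 1 - 2 * ((v j).val : ℤ)) ''
        (Submodule.span (ZMod 2) (Set.range fun m : Fin n => fun j => A m j) :
          Set (Fin N → ZMod 2))) ∧
    (Set.range (fun x : Fin (2 ^ n) => fun j => pauliK n N A x j)).ncard = 2 ^ A.rank ∧
    (∀ κ ∈ Set.range (fun x : Fin (2 ^ n) => fun j => pauliK n N A x j),
      (Finset.univ.filter
        (fun x : Fin (2 ^ n) => (fun j => pauliK n N A x j) = κ)).card = 2 ^ (n - A.rank)) ∧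
    (∀ κ ∈ Set.range (fun x : Fin (2 ^ n) => fun j => pauliK n N A x j),
      ((Finset.univ.filter
        (fun x : Fin (2 ^ n) => (fun j => pauliK n N A x j) = κ)).card : ℝ) / 2 ^ n =
        1 / 2 ^ A.rank) := by
  have hrange : Set.range (fun x : Fin (2 ^ n) => fun j => pauliK n N A x j) =
      signVec N '' (LinearMap.range A.vecMulLinear : Set (Fin N → ZMod 2)) := by
    simp only [pauliK_row]
    rw [LinearMap.coe_range, ← Set.range_comp,
      ← (bitsEquiv n).surjective.range_comp (signVec N ∘ A.vecMulLinear)]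
    rfl
  have hfib : ∀ κ ∈ Set.range (fun x : Fin (2 ^ n) => fun j => pauliK n N A x j),
      (Finset.univ.filter
        (fun x : Fin (2 ^ n) => (fun j => pauliK n N A x j) = κ)).card = 2 ^ (n - A.rank) := by
    rintro _ ⟨x₀, rfl⟩
    simp only [pauliK_row, (signVec_injective N).eq_iff]
    rw [← card_fibre_vecMulLinear n N A (bitsEquiv n x₀)]
    exact Finset.card_equiv (bitsEquiv n) fun x => by
      rw [Finset.mem_filter, Finset.mem_filter]; simp
  refine ⟨?_, ?_, hfib, ?_⟩
  · rw [hrange, range_vecMulLinear]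
    rfl
  · rw [hrange, Set.ncard_image_of_injective _ (signVec_injective N),
      ← finrank_range_vecMulLinear]
    have h := Module.natCard_eq_pow_finrank (K := ZMod 2) (V := LinearMap.range A.vecMulLinear)
    rwa [Nat.card_zmod] at h
  · intro κ hκ
    have hle : A.rank ≤ n := by simpa using A.rank_le_height
    rw [hfib κ hκ, div_eq_div_iff (by positivity) (by positivity), one_mul]
    push_cast
    rw [← pow_add, Nat.sub_add_cancel hle]
end

section
/- Lattice of the random walk for Pauli-Z circuits: the lattice lat(W) = span_ℤ{k_x − k_{x'} : 1 ≤ x, x' ≤ 2^n} satisfies lat(W) = span_ℤ(Ω − 𝟏) = span_ℤ(2·row_{ℤ2}(A)), where Ω − 𝟏 is the set obtained by subtracting 1 from every entry of each vector in Ω, and 2·row_{ℤ2}(A) is the set of doubles of the elements of the row space of A over ℤ/2 viewed as 0/1 integer vectors. -/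
/-!
Writing `v_x = Σ_m x_m A_m` for the combination of the rows of `A` over `ℤ/2` whose coefficients
are the bits of `x`, the identity `(-1)^k - 1 = -2 (k mod 2)` gives `k_x - 𝟏 = -2 v_x`
(`pauliK_sub_one`). Every coefficient vector in `(ℤ/2)^n` is the bit vector of some `x < 2^n`,
so `v_x` runs over the whole row space (`mem_rowSpace_iff`), and the generators of the second and
third lattices agree up to sign. For the first equality, `k_0 = 𝟏` makes each `k_x - 𝟏` a difference
of rows, while conversely `k_x - k_{x'} = (k_x - 𝟏) - (k_{x'} - 𝟏)`.
-/

open Matrix Finset MeasureTheory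

/-- The combination of the rows of `A` over `ℤ/2` with coefficients the bits of `x`. -/
def rowComb (n N : ℕ) (A : Matrix (Fin n) (Fin N) (ZMod 2)) (x : Fin (2 ^ n)) :
    Fin N → ZMod 2 :=
  fun j => ∑ m, (bin n x m : ZMod 2) * A m j

lemma neg_one_pow_sub_one (k : ℕ) :
    (-1 : ℤ) ^ k - 1 = -(2 * (((k : ZMod 2)).val : ℤ)) := by
  rw [ZMod.val_natCast, neg_one_pow_eq_pow_mod_two]
  rcases Nat.mod_two_eq_zero_or_one k with h | h <;> simp [h]

lemma pauliK_sub_one (n N : ℕ) (A : Matrix (Fin n) (Fin N) (ZMod 2)) (x : Fin (2 ^ n))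
    (j : Fin N) : pauliK n N A x j - 1 = -(2 * ((rowComb n N A x j).val : ℤ)) := by
  rw [pauliK, neg_one_pow_sub_one]
  simp [rowComb]

lemma pauliK_zero (n N : ℕ) (A : Matrix (Fin n) (Fin N) (ZMod 2)) (j : Fin N) :
    pauliK n N A ⟨0, by positivity⟩ j = 1 := by
  simp [pauliK, bin]

lemma exists_bin_eq (n : ℕ) (c : Fin n → ZMod 2) :
    ∃ x : Fin (2 ^ n), ∀ m, (bin n x m : ZMod 2) = c m := by
  -- `ZMod 2` unfolds to `Fin 2`, so `c` is a string of binary digits.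
  refine ⟨finFunctionFinEquiv (m := 2) c, fun m => ?_⟩
  have h := congrArg (fun f : Fin n → Fin 2 => (f m : ℕ))
    (finFunctionFinEquiv.symm_apply_apply (show Fin n → Fin 2 from c))
  have h' : bin n (finFunctionFinEquiv (m := 2) c) m = (c m).val := h
  rw [h', ZMod.natCast_zmod_val]

lemma mem_rowSpace_iff (n N : ℕ) (A : Matrix (Fin n) (Fin N) (ZMod 2)) (v : Fin N → ZMod 2) :
    v ∈ Submodule.span (ZMod 2) (Set.range fun m : Fin n => fun j => A m j) ↔
      ∃ x, rowComb n N A x = v := by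
  rw [Submodule.mem_span_range_iff_exists_fun]
  constructor
  · rintro ⟨c, rfl⟩
    obtain ⟨x, hx⟩ := exists_bin_eq n c
    refine ⟨x, funext fun j => ?_⟩
    simp [rowComb, hx]
  · rintro ⟨x, rfl⟩
    refine ⟨fun m => (bin n x m : ZMod 2), funext fun j => ?_⟩
    simp [rowComb]

/-- the lattice of the random walk for Pauli-Z circuits:
`lat(W) = span_ℤ{k_x − k_{x'}} = span_ℤ(Ω − 𝟏) = span_ℤ(2·row_{ℤ2}(A))`. -/
theorem stmt_13 (n N : ℕ) (hn : 1 ≤ n) (hnN : n ≤ N) (hN : N ≤ 2 ^ n - 1)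
    (A : Matrix (Fin n) (Fin N) (ZMod 2))
    (hinj : Function.Injective (fun j : Fin N => fun m => A m j))
    (hnz : ∀ j : Fin N, (fun m => A m j) ≠ 0) :
    Submodule.span ℤ
        {d : Fin N → ℤ | ∃ x x', d = fun j => pauliK n N A x j - pauliK n N A x' j} =
      Submodule.span ℤ
        ((fun ω : Fin N → ℤ => fun j => ω j - 1) ''
          Set.range (fun x : Fin (2 ^ n) => fun j => pauliK n N A x j)) ∧
    Submodule.span ℤ
        ((fun ω : Fin N → ℤ => fun j => ω j - 1) ''
          Set.range (fun x : Fin (2 ^ n) => fun j => pauliK n N A x j)) =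
      Submodule.span ℤ
        ((fun v : Fin N → ZMod 2 => fun j => 2 * ((v j).val : ℤ)) ''
          (Submodule.span (ZMod 2) (Set.range fun m : Fin n => fun j => A m j) :
            Set (Fin N → ZMod 2))) := by
  constructor
  · apply le_antisymm <;> rw [Submodule.span_le]
    · rintro _ ⟨x, x', rfl⟩
      have hx (y : Fin (2 ^ n)) : (fun j => pauliK n N A y j - 1) ∈ Submodule.span ℤ
          ((fun ω : Fin N → ℤ => fun j => ω j - 1) ''
            Set.range (fun x : Fin (2 ^ n) => fun j => pauliK n N A x j)) :=
        Submodule.subset_span ⟨_, ⟨y, rfl⟩, rfl⟩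
      rw [SetLike.mem_coe]
      convert Submodule.sub_mem _ (hx x) (hx x') using 1
      funext j
      simp
    · rintro _ ⟨_, ⟨x, rfl⟩, rfl⟩
      refine Submodule.subset_span ⟨x, ⟨0, by positivity⟩, funext fun j => ?_⟩
      rw [pauliK_zero]
  · apply le_antisymm <;> rw [Submodule.span_le]
    · rintro _ ⟨_, ⟨x, rfl⟩, rfl⟩
      rw [SetLike.mem_coe, ← Submodule.neg_mem_iff]
      refine Submodule.subset_span
        ⟨rowComb n N A x, (mem_rowSpace_iff n N A _).2 ⟨x, rfl⟩, funext fun j => ?_⟩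
      simp only [Pi.neg_apply, pauliK_sub_one, neg_neg]
    · rintro _ ⟨v, hv, rfl⟩
      obtain ⟨x, rfl⟩ := (mem_rowSpace_iff n N A v).1 hv
      rw [SetLike.mem_coe, ← Submodule.neg_mem_iff]
      refine Submodule.subset_span ⟨_, ⟨x, rfl⟩, funext fun j => ?_⟩
      simp only [Pi.neg_apply, pauliK_sub_one]
end

section
/- The lattice volume is a Hadamard minor: there exists an (N+1) × (N+1) submatrix M of the Sylvester Hadamard matrix H_{2^n} (obtained by selecting N+1 rows and N+1 columns) such that V_U = |det M|. -/
/-!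
Identify points of `{0,1}ⁿ` with subsets of `Fin n`. Then the Sylvester matrix has entries
`chi x s = (-1)^#(x ∩ s)`, and `𝐊` consists of the columns `a j` of this matrix, where `a j` is the
support of the `j`-th column of `A`. With `zet I s = [I ⊆ s]` (the squarefree monomial `I` evaluated
at `s`), inclusion–exclusion turns characters into monomials (`chi_expand`, `zet_expand`), and so
`lat(W)` is spanned by the vectors `2 ^ #I * zet I (a j)` with `I ≠ ∅`.

*The covolume is a power of two `2 ^ v`, with `v` in a controlled range.*
The lexicographic standard monomials of the point set `{∅} ∪ {a j}` form a lower set `D` of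
cardinality `N + 1` and are a `ℤ`-basis of the functions on these points
(`exists_standard_monomials`). The corresponding lattice vectors have determinant `± 2 ^ (∑ #I)`,
the sum being over `I ∈ D`, so the covolume divides this (`exists_lower_set_dvd`). Conversely,
expanding the determinant of a lattice basis over the spanning vectors shows that `v` is at least
the total size of some `N` distinct nonempty sets; together with `∅` these form a family `F` of
`N + 1` sets (`exists_family_le`).

*Every `2 ^ v` with `∑_{I ∈ F} #I ≤ v ≤ ∑_{I ∈ D} #I` is a Hadamard minor* (`exists_chi_minor`).
If a lower set `D` indexes both rows and columns, the minor is `± 2 ^ (∑_{I ∈ D} #I)` (`det_chi`).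
If `v` is smaller than this exponent, `D` does not have minimal total size, and one may exchange a
maximal member `X` for a smaller minimal non-member `W` (`exists_exchange`), which keeps it a lower
set and decreases the total size by `#X - #W`. This is iterated until the total size is at most `v`.
When the last exchange jumps over `v`, it can be arranged that `W \ {i} ⊆ X` for some `i ∈ W`. The
rows are then the new lower set, and the columns are the old one with `i` added to a suitable family
of `2 ^ j` points; this graph-like point set makes the monomial determinant equal to `± 2 ^ j` for
any `j < #X - #W` (`exists_det_zet_eq_two_pow`), which fills the gap.
-/

open Matrix Finset MeasureTheory

open scoped Finset

/-! ### Characters and monomials on the cube -/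

/-- `zet I s` is the value at `s ∈ {0,1}ⁿ` (seen as a subset) of the squarefree monomial indexed by
`I`: it is `1` if `I ⊆ s` and `0` otherwise. -/
def zet {α : Type*} [DecidableEq α] (I s : Finset α) : ℤ := if I ⊆ s then 1 else 0

/-- The character `(-1)^⟨x, s⟩`, with `x` and `s` seen as subsets of `α`. -/
def chi {α : Type*} [DecidableEq α] (x s : Finset α) : ℤ := (-1) ^ #(x ∩ s)

theorem prod_ite_eq_zet {α : Type*} [DecidableEq α] (I s : Finset α) (b : ℤ) :
    ∏ m ∈ I, (if m ∈ s then b else 0) = b ^ #I * zet I s := by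
  unfold zet
  split_ifs with h
  · rw [Finset.prod_congr rfl (fun m hm => if_pos (h hm))]
    simp
  · obtain ⟨m, hm, hms⟩ := Finset.not_subset.1 h
    rw [Finset.prod_eq_zero hm (by simp [hms])]
    simp

theorem chi_eq_prod {α : Type*} [DecidableEq α] (x s : Finset α) :
    chi x s = ∏ m ∈ x, (if m ∈ s then (-1 : ℤ) else 1) := by
  unfold chi
  rw [Finset.prod_ite]
  simp [Finset.filter_mem_eq_inter]

/-- Expansion of `∏_{m ∈ x} (1 - 2 s_m)`. -/
theorem chi_expand {α : Type*} [DecidableEq α] (x s : Finset α) :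
    chi x s = ∑ I ∈ x.powerset, (-2) ^ #I * zet I s := by
  rw [chi_eq_prod]
  have : ∀ m ∈ x, (if m ∈ s then (-1 : ℤ) else 1) = 1 + (if m ∈ s then (-2) else 0) := by
    intro m _; split_ifs <;> norm_num
  rw [Finset.prod_congr rfl this, Finset.prod_one_add]
  exact Finset.sum_congr rfl fun I _ => prod_ite_eq_zet I s (-2)

/-- Expansion of `∏_{m ∈ I} (1 - (-1)^{s_m})`. -/
theorem zet_expand {α : Type*} [DecidableEq α] (I s : Finset α) :
    ∑ J ∈ I.powerset, (-1) ^ #J * chi J s = 2 ^ #I * zet I s := by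
  rw [← prod_ite_eq_zet]
  have : ∀ m ∈ I, (if m ∈ s then (2 : ℤ) else 0) = 1 + (-1) * (if m ∈ s then (-1 : ℤ) else 1) := by
    intro m _; split_ifs <;> norm_num
  rw [Finset.prod_congr rfl this, Finset.prod_one_add]
  refine Finset.sum_congr rfl fun J _ => ?_
  rw [Finset.prod_mul_distrib, chi_eq_prod]
  simp

/-- A square matrix with unit diagonal whose off-diagonal nonzero entries strictly increase a rank
function is unitriangular after reordering. -/
theorem det_eq_one_of_rank {ι : Type*} [Fintype ι] [DecidableEq ι] (M : Matrix ι ι ℤ) (ρ : ι → ℕ)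
    (hd : ∀ a, M a a = 1) (h : ∀ a b, a ≠ b → M a b ≠ 0 → ρ a < ρ b) : M.det = 1 := by
  have hb : M.BlockTriangular ρ := by
    intro a b hab
    by_contra hne
    have : a ≠ b := by rintro rfl; exact lt_irrefl _ hab
    exact absurd (h a b this hne) (not_lt.2 hab.le)
  rw [hb.det]
  refine Finset.prod_eq_one fun k _ => ?_
  have : M.toSquareBlock ρ k = 1 := by
    ext ⟨a, ha⟩ ⟨b, hb'⟩
    by_cases hab : a = b
    · subst hab
      simp [Matrix.toSquareBlock_def, hd]
    · rw [Matrix.one_apply_ne (by simpa using hab)]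
      by_contra hne
      have := h a b hab hne
      omega
  rw [this, Matrix.det_one]

/-! ### Standard monomials of a point set -/

/-- `sh` sends a family `S` of points of the cube to a lower set of monomials which is a `ℤ`-basis
of the functions on `S` (these are the lexicographic standard monomials of `S`, or the sets
order-shattered by `S`). Monotonicity in `S` is what makes the induction on the ground set work. -/
theorem exists_standard_monomials {α : Type*} [DecidableEq α] (U : Finset α) :
    ∃ sh : Finset (Finset α) → Finset (Finset α), ∀ S, S ⊆ U.powerset →
      sh S ⊆ U.powerset ∧ #(sh S) = #S ∧ IsLowerSet (sh S : Set (Finset α)) ∧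
      (∀ T, T ⊆ S → sh T ⊆ sh S) ∧
      ∀ g : Finset α → ℤ, ∃ c : Finset α → ℤ, ∀ s ∈ S, g s = ∑ I ∈ sh S, c I * zet I s := by
  induction U using Finset.induction_on with
  | empty =>
    refine ⟨id, fun S hS => ⟨hS, rfl, ?_, fun T hT => hT, fun g => ⟨g, fun s hs => ?_⟩⟩⟩
    · intro a b hba ha
      have h1 : a = ∅ := by simpa using hS ha
      subst h1
      have h2 : b = ∅ := Finset.subset_empty.1 hba
      subst h2
      exact ha
    · have h1 : s = ∅ := by simpa using hS hs
      subst h1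
      have h2 : S = {∅} := by
        apply Finset.Subset.antisymm
        · simpa using hS
        · simpa using hs
      subst h2
      simp [zet]
  | insert a U ha ih =>
    obtain ⟨sh, hsh⟩ := ih
    have hU : ∀ S : Finset (Finset α), S ⊆ (insert a U).powerset →
        S.nonMemberSubfamily a ⊆ U.powerset ∧ S.memberSubfamily a ⊆ U.powerset := by
      intro S hS
      constructor
      · intro s hs
        rw [Finset.mem_nonMemberSubfamily] at hs
        have := Finset.mem_powerset.1 (hS hs.1)
        rw [Finset.mem_powerset]
        intro x hx
        rcases Finset.mem_insert.1 (this hx) with rfl | h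
        · exact absurd hx hs.2
        · exact h
      · intro s hs
        rw [Finset.mem_memberSubfamily] at hs
        have := Finset.mem_powerset.1 (hS hs.1)
        rw [Finset.mem_powerset]
        intro x hx
        rcases Finset.mem_insert.1 (this (Finset.mem_insert_of_mem hx)) with rfl | h
        · exact absurd hx hs.2
        · exact h
    -- monomials without `a` come from the projection of `S` along `a`, those with `a` from the points
    -- both of whose lifts lie in `S`
    refine ⟨fun S => sh (S.nonMemberSubfamily a ∪ S.memberSubfamily a) ∪
      (sh (S.nonMemberSubfamily a ∩ S.memberSubfamily a)).image (insert a), fun S hS => ?_⟩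
    have hcup : S.nonMemberSubfamily a ∪ S.memberSubfamily a ⊆ U.powerset :=
      Finset.union_subset (hU S hS).1 (hU S hS).2
    have hcap : S.nonMemberSubfamily a ∩ S.memberSubfamily a ⊆ U.powerset :=
      Finset.inter_subset_left.trans (hU S hS).1
    obtain ⟨u1, u2, u3, u4, u5⟩ := hsh _ hcup
    obtain ⟨i1, i2, i3, i4, i5⟩ := hsh _ hcap
    have hau : ∀ I ∈ sh (S.nonMemberSubfamily a ∪ S.memberSubfamily a), a ∉ I :=
      fun I hI h => ha (Finset.mem_powerset.1 (u1 hI) h)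
    have hai : ∀ I ∈ sh (S.nonMemberSubfamily a ∩ S.memberSubfamily a), a ∉ I :=
      fun I hI h => ha (Finset.mem_powerset.1 (i1 hI) h)
    have hdisj : Disjoint (sh (S.nonMemberSubfamily a ∪ S.memberSubfamily a))
        ((sh (S.nonMemberSubfamily a ∩ S.memberSubfamily a)).image (insert a)) := by
      rw [Finset.disjoint_left]
      intro I hI hI'
      obtain ⟨J, -, rfl⟩ := Finset.mem_image.1 hI'
      exact hau _ hI (Finset.mem_insert_self a J)
    have hinjOn : Set.InjOn (insert a)
        (sh (S.nonMemberSubfamily a ∩ S.memberSubfamily a) : Set (Finset α)) := by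
      intro I hI J hJ hIJ
      have h1 := hai I hI
      have h2 := hai J hJ
      rw [← Finset.erase_insert h1, ← Finset.erase_insert h2]
      exact congrArg (fun K => K.erase a) hIJ
    refine ⟨?_, ?_, ?_, ?_, ?_⟩
    · apply Finset.union_subset
      · exact u1.trans (Finset.powerset_mono.2 (Finset.subset_insert a U))
      · intro I hI
        obtain ⟨J, hJ, rfl⟩ := Finset.mem_image.1 hI
        exact Finset.mem_powerset.2 (Finset.insert_subset_insert a (Finset.mem_powerset.1 (i1 hJ)))
    · rw [Finset.card_union_of_disjoint hdisj, Finset.card_image_of_injOn hinjOn, u2, i2,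
        Finset.card_union_add_card_inter, add_comm,
        Finset.card_memberSubfamily_add_card_nonMemberSubfamily]
    · intro I K hKI hI
      simp only [Finset.coe_union, Set.mem_union, Finset.mem_coe] at hI ⊢
      rcases hI with hI | hI
      · exact Or.inl (u3 hKI hI)
      · obtain ⟨J, hJ, rfl⟩ := Finset.mem_image.1 hI
        have hKI : K ⊆ insert a J := hKI
        have hKJ : K.erase a ⊆ J := by
          rw [← Finset.erase_insert (hai J hJ)]
          exact Finset.erase_subset_erase a hKI
        by_cases haK : a ∈ K
        · right
          exact Finset.mem_image.2 ⟨K.erase a, i3 hKJ hJ, Finset.insert_erase haK⟩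
        · left
          rw [Finset.erase_eq_of_notMem haK] at hKJ
          exact u4 _ (Finset.inter_subset_left.trans Finset.subset_union_left) (i3 hKJ hJ)
    · intro T hT
      have m0 : T.nonMemberSubfamily a ⊆ S.nonMemberSubfamily a := by
        intro s; simp only [Finset.mem_nonMemberSubfamily]; exact fun h => ⟨hT h.1, h.2⟩
      have m1 : T.memberSubfamily a ⊆ S.memberSubfamily a := by
        intro s; simp only [Finset.mem_memberSubfamily]; exact fun h => ⟨hT h.1, h.2⟩
      exact Finset.union_subset_union (u4 _ (Finset.union_subset_union m0 m1))
        (Finset.image_subset_image (i4 _ (Finset.inter_subset_inter m0 m1)))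
    · intro g
      -- the coefficient of `x_a` interpolates the difference of the two values on each full fibre;
      -- after subtracting it, what is left factors through the projection forgetting `a`
      obtain ⟨d, hd⟩ := i5 (fun s => g (insert a s) - g s)
      obtain ⟨c, hc⟩ := u5 (fun s => if s ∈ S then g s else g (insert a s) -
        ∑ I ∈ sh (S.nonMemberSubfamily a ∩ S.memberSubfamily a), d I * zet I s)
      refine ⟨fun K => if a ∈ K then d (K.erase a) else c K, fun s hs => ?_⟩
      rw [Finset.sum_union hdisj, Finset.sum_image hinjOn]
      have e1 : ∑ I ∈ sh (S.nonMemberSubfamily a ∪ S.memberSubfamily a),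
          (if a ∈ I then d (I.erase a) else c I) * zet I s =
          ∑ I ∈ sh (S.nonMemberSubfamily a ∪ S.memberSubfamily a), c I * zet I (s.erase a) := by
        refine Finset.sum_congr rfl fun I hI => ?_
        have h1 := hau I hI
        have h2 : I ⊆ s.erase a ↔ I ⊆ s := by
          rw [Finset.subset_erase]; simp [h1]
        simp [zet, h1, h2]
      have e2 : ∑ I ∈ sh (S.nonMemberSubfamily a ∩ S.memberSubfamily a),
          (if a ∈ insert a I then d ((insert a I).erase a) else c (insert a I)) *
            zet (insert a I) s =
          if a ∈ s then ∑ I ∈ sh (S.nonMemberSubfamily a ∩ S.memberSubfamily a),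
            d I * zet I (s.erase a) else 0 := by
        split_ifs with has
        · refine Finset.sum_congr rfl fun I hI => ?_
          have h1 := hai I hI
          have h2 : I ⊆ s.erase a ↔ I ⊆ s := by
            rw [Finset.subset_erase]; simp [h1]
          simp [zet, h1, h2, Finset.insert_subset_iff, has]
        · refine Finset.sum_eq_zero fun I hI => ?_
          simp [zet, Finset.insert_subset_iff, has]
      rw [e1, e2]
      by_cases has : a ∈ s
      · have hs1 : s.erase a ∈ S.memberSubfamily a := by
          rw [Finset.mem_memberSubfamily, Finset.insert_erase has]
          exact ⟨hs, Finset.notMem_erase a s⟩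
        rw [if_pos has, ← hc _ (Finset.mem_union_right _ hs1), Finset.insert_erase has]
        split_ifs with h0
        · have := hd (s.erase a) (Finset.mem_inter.2
            ⟨Finset.mem_nonMemberSubfamily.2 ⟨h0, Finset.notMem_erase a s⟩, hs1⟩)
          rw [← this, Finset.insert_erase has]
          ring
        · ring
      · rw [if_neg has, Finset.erase_eq_of_notMem has, add_zero, ← hc s (Finset.mem_union_left _
          (Finset.mem_nonMemberSubfamily.2 ⟨hs, has⟩)), if_pos hs]

/-! ### Minors attached to lower sets -/

/-- Möbius inversion on the Boolean lattice. -/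
theorem mobius_powerset {α : Type*} [DecidableEq α] (s t : Finset α) :
    ∑ I ∈ t.powerset, (-1) ^ #I * zet s I = if s = t then (-1) ^ #t else 0 := by
  by_cases hst : s ⊆ t
  · have h := Finset.prod_add (fun _ : α => (-1 : ℤ)) (fun m => if m ∈ s then (0 : ℤ) else 1) t
    have h1 : ∏ m ∈ t, ((-1 : ℤ) + if m ∈ s then (0 : ℤ) else 1) = (-1) ^ #t * zet t s := by
      rw [← prod_ite_eq_zet]
      refine Finset.prod_congr rfl fun m _ => ?_
      split_ifs <;> norm_num
    have h2 : ∀ I ∈ t.powerset, (-1 : ℤ) ^ #I * zet s I =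
        (∏ _m ∈ I, (-1 : ℤ)) * ∏ m ∈ t \ I, (if m ∈ s then (0 : ℤ) else 1) := by
      intro I _
      rw [Finset.prod_const]
      congr 1
      unfold zet
      split_ifs with hs
      · symm
        refine Finset.prod_eq_one fun m hm => if_neg fun hms => ?_
        exact (Finset.mem_sdiff.1 hm).2 (hs hms)
      · obtain ⟨m, hm, hmI⟩ := Finset.not_subset.1 hs
        symm
        exact Finset.prod_eq_zero (Finset.mem_sdiff.2 ⟨hst hm, hmI⟩) (if_pos hm)
    rw [Finset.sum_congr rfl h2, ← h, h1]
    unfold zet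
    by_cases hts : t ⊆ s
    · simp [Finset.Subset.antisymm hst hts]
    · have : s ≠ t := by rintro rfl; exact hts subset_rfl
      simp [hts, this]
  · rw [if_neg (by rintro rfl; exact hst subset_rfl)]
    refine Finset.sum_eq_zero fun I hI => ?_
    have : ¬ s ⊆ I := fun h => hst (h.trans (Finset.mem_powerset.1 hI))
    simp [zet, this]

theorem card_even_powerset {α : Type*} (A : Finset α) (j : ℕ) (hA : #A = j + 1) :
    #{B ∈ A.powerset | Even #B} = 2 ^ j := by
  have hne : A.Nonempty := Finset.card_pos.1 (by omega)
  have h1 : ∑ B ∈ A.powerset, ((-1 : ℤ) ^ #B + 1) = 2 ^ (j + 1) := by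
    rw [Finset.sum_add_distrib, Finset.sum_powerset_neg_one_pow_card_of_nonempty hne]
    simp [hA]
  have h2 : ∑ B ∈ A.powerset, ((-1 : ℤ) ^ #B + 1) = 2 * (#{B ∈ A.powerset | Even #B} : ℤ) := by
    rw [Finset.card_filter]
    push_cast
    rw [Finset.mul_sum]
    refine Finset.sum_congr rfl fun B _ => ?_
    split_ifs with h
    · rw [h.neg_one_pow]; norm_num
    · rw [(Nat.not_even_iff_odd.1 h).neg_one_pow]; norm_num
  have h3 : (2 : ℤ) * (#{B ∈ A.powerset | Even #B} : ℤ) = 2 * ((2 ^ j : ℕ) : ℤ) := by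
    rw [← h2, h1]; push_cast; ring
  exact_mod_cast mul_left_cancel₀ (by norm_num) h3

/-- When the rows form a lower set, the inclusion–exclusion expansion of characters into monomials
is unitriangular, up to the powers of `2` carried by the monomials. -/
theorem det_chi {α ι : Type*} [DecidableEq α] [Fintype ι] [DecidableEq ι] (r c : ι → Finset α)
    (hr : Function.Injective r) (hlow : ∀ a I, I ⊆ r a → ∃ b, r b = I) :
    |(Matrix.of fun a b => chi (r a) (c b)).det| =
      2 ^ (∑ a, #(r a)) * |(Matrix.of fun a b => zet (r a) (c b)).det| := by
  have hT : (Matrix.of fun a k => zet (r a) (r k)).det = 1 := by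
    refine det_eq_one_of_rank _ (fun a => #(r a)) (fun a => by simp [zet]) fun a b hab h => ?_
    have hsub : r a ⊆ r b := by
      by_contra hn
      exact h (by simp [zet, hn])
    exact Finset.card_lt_card (hsub.ssubset_of_ne fun h => hab (hr h))
  have hM : (Matrix.of fun a b => chi (r a) (c b)) =
      (Matrix.of fun a k => zet (r a) (r k))ᵀ *
        (Matrix.diagonal (fun k => (-2 : ℤ) ^ #(r k)) * Matrix.of fun a b => zet (r a) (c b)) := by
    ext a b
    rw [Matrix.mul_apply]
    simp only [Matrix.of_apply, Matrix.transpose_apply, Matrix.diagonal_mul]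
    rw [chi_expand]
    have himg : (r a).powerset = ({k | r k ⊆ r a} : Finset ι).image r := by
      ext I
      simp only [Finset.mem_powerset, Finset.mem_image, Finset.mem_filter, Finset.mem_univ,
        true_and]
      constructor
      · intro h
        obtain ⟨k, rfl⟩ := hlow a I h
        exact ⟨k, h, rfl⟩
      · rintro ⟨k, h, rfl⟩
        exact h
    rw [himg, Finset.sum_image hr.injOn, Finset.sum_filter]
    refine Finset.sum_congr rfl fun k _ => ?_
    by_cases h : r k ⊆ r a <;> simp [zet, h]
  rw [hM, Matrix.det_mul, Matrix.det_mul, Matrix.det_transpose, hT, Matrix.det_diagonal, one_mul,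
    abs_mul, Finset.abs_prod]
  simp [abs_pow, Finset.prod_pow_eq_pow_sum]

/-- Replacing the row of a member `X` by that of a non-member `W` with `W \ {i} ⊆ X`, and adding `i`
to the points of a family `F` between `W \ {i}` and `X`, multiplies the monomial
determinant by `∑ s ∈ F, (-1)^(#X - #s)`; taking all points of `F` of the same parity makes this any
prescribed small power of `2`. -/
theorem exists_det_zet_eq_two_pow {α : Type*} [DecidableEq α] (D : Finset (Finset α))
    (hD : IsLowerSet (D : Set (Finset α))) (X : D) (W : Finset α) (hW : W ∉ D) (i : α) (hiW : i ∈ W)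
    (hWX : W.erase i ⊆ X) (j : ℕ) (hj : #W + j < #X.1) :
    ∃ τ : D → Finset α, Function.Injective τ ∧
      |(Matrix.of fun a b : D => zet (if a = X then W else a.1) (τ b)).det| = 2 ^ j := by
  have hiX : i ∉ X.1 := fun h => hW (hD (show W ⊆ X.1 by
    rw [← Finset.insert_erase hiW]; exact Finset.insert_subset h hWX) X.2)
  -- points `Y ∪ B` with `Y = W \ {i}` and `B` an even subset of a `(j+1)`-subset `A` of `X \ Y`
  obtain ⟨F, hF1, hF2, hFc, ε, hε, hFε⟩ : ∃ F : Finset (Finset α), (∀ s ∈ F, W.erase i ⊆ s) ∧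
      (∀ s ∈ F, s ⊆ X) ∧ #F = 2 ^ j ∧ ∃ ε : ℤ, |ε| = 1 ∧ ∀ s ∈ F, (-1) ^ #s = ε := by
    have hcW : #(W.erase i) + 1 = #W := Finset.card_erase_add_one hiW
    have hc : #(X.1 \ W.erase i) + #(W.erase i) = #X.1 := Finset.card_sdiff_add_card_eq_card hWX
    obtain ⟨A, hA, hAc⟩ := Finset.exists_subset_card_eq
      (show j + 1 ≤ #(X.1 \ W.erase i) by omega)
    have hdis : ∀ B ∈ A.powerset, Disjoint (W.erase i) B := fun B hB =>
      Finset.disjoint_of_subset_right ((Finset.mem_powerset.1 hB).trans hA) Finset.disjoint_sdiff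
    refine ⟨({B ∈ A.powerset | Even #B} : Finset (Finset α)).image (W.erase i ∪ ·), ?_, ?_, ?_,
      (-1) ^ #(W.erase i), by simp [abs_pow], ?_⟩
    · intro s hs
      obtain ⟨B, -, rfl⟩ := Finset.mem_image.1 hs
      exact Finset.subset_union_left
    · intro s hs
      obtain ⟨B, hB, rfl⟩ := Finset.mem_image.1 hs
      exact Finset.union_subset hWX
        (((Finset.mem_powerset.1 (Finset.mem_filter.1 hB).1).trans hA).trans Finset.sdiff_subset)
    · rw [Finset.card_image_of_injOn, card_even_powerset A j hAc]
      intro B hB C hC hBC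
      have hB' := hdis B (Finset.mem_filter.1 hB).1
      have hC' := hdis C (Finset.mem_filter.1 hC).1
      rw [← Finset.union_sdiff_cancel_left hB', ← Finset.union_sdiff_cancel_left hC']
      exact congrArg (· \ W.erase i) hBC
    · intro s hs
      obtain ⟨B, hB, rfl⟩ := Finset.mem_image.1 hs
      have hB' := Finset.mem_filter.1 hB
      rw [Finset.card_union_of_disjoint (hdis B hB'.1), pow_add, hB'.2.neg_one_pow, mul_one]
  have hWsub : ∀ s : Finset α, W.erase i ⊆ s → W ⊆ insert i s := fun s hs => by
    rw [← Finset.insert_erase hiW]; exact Finset.insert_subset_insert i hs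
  have hiF : ∀ s ∈ F, i ∉ s := fun s hs h => hiX (hF2 s hs h)
  have hFD : ∀ s ∈ F, insert i s ∉ D := fun s hs h => hW (hD (hWsub s (hF1 s hs)) h)
  let τ : D → Finset α := fun s => if s.1 ∈ F then insert i s.1 else s.1
  have hτsub : ∀ s, τ s ⊆ insert i s.1 := by
    intro s
    simp only [τ]
    split_ifs
    · exact subset_rfl
    · exact Finset.subset_insert _ _
  have hsubτ : ∀ s, s.1 ⊆ τ s := by
    intro s
    simp only [τ]
    split_ifs
    · exact Finset.subset_insert _ _
    · exact subset_rfl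
  refine ⟨τ, ?_, ?_⟩
  · intro s t hst
    simp only [τ] at hst
    split_ifs at hst with h1 h2 h2
    · apply Subtype.ext
      rw [← Finset.erase_insert (hiF _ h1), ← Finset.erase_insert (hiF _ h2), hst]
    · exact absurd (hst ▸ t.2) (hFD _ h1)
    · exact absurd (hst ▸ s.2) (hFD _ h2)
    · exact Subtype.ext hst
  · have hZ : (Matrix.of fun a b : D => zet a.1 (τ b)).det = 1 := by
      refine det_eq_one_of_rank _ (fun s => 2 * #(s.1.erase i) + if i ∈ s.1 then 1 else 0)
        (fun a => by simp [zet, hsubτ]) fun a b hab h => ?_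
      have hsub : a.1 ⊆ τ b := by
        by_contra hn
        exact h (by simp [zet, hn])
      have hsub' : a.1.erase i ⊆ b.1.erase i := by
        intro m hm
        rw [Finset.mem_erase] at hm ⊢
        refine ⟨hm.1, ?_⟩
        rcases Finset.mem_insert.1 (hτsub b (hsub hm.2)) with h | h
        · exact absurd h hm.1
        · exact h
      rcases hsub'.eq_or_ssubset with heq | hss
      · have hba : i ∈ b.1 ∧ i ∉ a.1 := by
          by_cases hb : i ∈ b.1
          · refine ⟨hb, fun ha => hab (Subtype.ext ?_)⟩
            rw [← Finset.insert_erase ha, ← Finset.insert_erase hb, heq]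
          · exfalso
            by_cases ha : i ∈ a.1
            · have hbF : b.1 ∈ F := by
                by_contra hbF
                apply hb
                have := hsub ha
                simpa only [τ, if_neg hbF] using this
              apply hFD _ hbF
              rw [← Finset.erase_eq_of_notMem hb, ← heq, Finset.insert_erase ha]
              exact a.2
            · apply hab (Subtype.ext ?_)
              rw [← Finset.erase_eq_of_notMem ha, ← Finset.erase_eq_of_notMem hb, heq]
        simp only [heq, if_pos hba.1, if_neg hba.2]
        omega
      · have := Finset.card_lt_card hss
        split_ifs <;> omega
    -- coefficients of the indicator function of `F` in the basis of monomials avoiding `i`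
    let μ : Finset α → ℤ := fun I => ∑ s ∈ F, (-1) ^ (#I + #s) * zet s I
    have hrow : ∀ b : D, zet W (τ b) =
        ∑ k : D, (if i ∈ k.1 then 0 else μ k.1) * zet k.1 (τ b) := by
      intro b
      have htD : b.1.erase i ∈ D := hD (Finset.erase_subset _ _) b.2
      have e1 : ∑ k : D, (if i ∈ k.1 then 0 else μ k.1) * zet k.1 (τ b) =
          ∑ k ∈ (b.1.erase i).powerset, μ k := by
        rw [Finset.sum_coe_sort D (fun k => (if i ∈ k then 0 else μ k) * zet k (τ b))]
        symm
        apply Finset.sum_subset_zero_on_sdiff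
        · intro k hk
          exact hD (Finset.mem_powerset.1 hk) htD
        · intro k hk
          have hk2 := (Finset.mem_sdiff.1 hk).2
          split_ifs with hik
          · simp
          · have : ¬ k ⊆ τ b := by
              intro hkb
              apply hk2
              rw [Finset.mem_powerset, Finset.subset_erase]
              refine ⟨fun m hm => ?_, hik⟩
              rcases Finset.mem_insert.1 (hτsub b (hkb hm)) with h | h
              · exact absurd (h ▸ hm) hik
              · exact h
            simp [zet, this]
        · intro k hk
          have hk := Finset.mem_powerset.1 hk
          have hik : i ∉ k := fun h => Finset.notMem_erase i b.1 (hk h)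
          have : k ⊆ τ b := hk.trans ((Finset.erase_subset _ _).trans (hsubτ b))
          simp [zet, this, hik]
      have e2 : ∑ k ∈ (b.1.erase i).powerset, μ k = if b.1.erase i ∈ F then 1 else 0 := by
        simp only [μ]
        rw [Finset.sum_comm]
        have : ∀ s ∈ F, ∑ k ∈ (b.1.erase i).powerset, (-1 : ℤ) ^ (#k + #s) * zet s k =
            if s = b.1.erase i then 1 else 0 := by
          intro s _
          have h := mobius_powerset s (b.1.erase i)
          have h' : ∀ k ∈ (b.1.erase i).powerset, (-1 : ℤ) ^ (#k + #s) * zet s k =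
              (-1) ^ #s * ((-1) ^ #k * zet s k) := fun k _ => by rw [pow_add]; ring
          rw [Finset.sum_congr rfl h', ← Finset.mul_sum, h]
          split_ifs with hs
          · rw [hs, ← pow_add, Even.neg_one_pow ⟨_, rfl⟩]
          · simp
        rw [Finset.sum_congr rfl this, Finset.sum_ite_eq']
      rw [e1, e2]
      have e3 : b.1.erase i ∈ F ↔ W ⊆ τ b := by
        by_cases hib : i ∈ b.1
        · have hbF : b.1 ∉ F := fun h => hiF _ h hib
          have hτ : τ b = b.1 := if_neg hbF
          rw [hτ]
          constructor
          · intro h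
            exact absurd (by rw [Finset.insert_erase hib]; exact b.2) (hFD _ h)
          · intro h
            exact absurd (hD h b.2) hW
        · rw [Finset.erase_eq_of_notMem hib]
          constructor
          · intro h
            have hτ : τ b = insert i b.1 := if_pos h
            rw [hτ]
            exact hWsub _ (hF1 _ h)
          · intro h
            by_contra hbF
            have hτ : τ b = b.1 := if_neg hbF
            rw [hτ] at h
            exact hW (hD h b.2)
      simp only [zet, e3]
    have hM : (Matrix.of fun a b : D => zet (if a = X then W else a.1) (τ b)) =
        (Matrix.of fun a b : D => zet a.1 (τ b)).updateRow X
          (∑ k : D, (if i ∈ k.1 then 0 else μ k.1) • (Matrix.of fun a b : D => zet a.1 (τ b)) k) := by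
      ext a b
      rw [Matrix.updateRow_apply]
      split_ifs with h
      · simp only [Matrix.of_apply, if_pos h, Finset.sum_apply, Pi.smul_apply, smul_eq_mul]
        exact hrow b
      · simp [h]
    rw [hM, Matrix.det_updateRow_sum, hZ, if_neg hiX]
    have hμ : μ X.1 = (-1) ^ #X.1 * (2 ^ j * ε) := by
      simp only [μ]
      have : ∀ s ∈ F, (-1 : ℤ) ^ (#X.1 + #s) * zet s X.1 = (-1) ^ #X.1 * ε := by
        intro s hs
        rw [pow_add, hFε s hs]
        simp [zet, hF2 s hs]
      rw [Finset.sum_congr rfl this, Finset.sum_const, hFc, nsmul_eq_mul]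
      push_cast
      ring
    rw [hμ, smul_eq_mul, mul_one, abs_mul, abs_mul, hε]
    simp [abs_pow]

/-! ### Descending through lower sets -/

/-- A lower set that does not minimise the total size of its members admits an exchange of a
maximal member `X` for a smaller minimal non-member `W` which either lowers the total size by
exactly `1`, or satisfies the hypothesis of `exists_det_zet_eq_two_pow`. -/
theorem exists_exchange {α : Type*} [DecidableEq α] [Fintype α] (D F : Finset (Finset α))
    (hD : IsLowerSet (D : Set (Finset α))) (hFD : #F = #D)
    (hlt : ∑ I ∈ F, #I < ∑ I ∈ D, #I) :
    ∃ X W : Finset α, X ∈ D ∧ (∀ I ∈ D, X ⊆ I → I = X) ∧ W ∉ D ∧ (∀ I, I ⊂ W → I ∈ D) ∧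
      #W < #X ∧ (#W + 1 = #X ∨ ∃ i ∈ W, W.erase i ⊆ X) := by
  have hDne : D.Nonempty := by
    rw [Finset.nonempty_iff_ne_empty]
    rintro rfl
    simp at hlt
  obtain ⟨X, hX, hXmax⟩ := Finset.exists_max_image D (fun I => #I) hDne
  -- if `D` contained every set smaller than its largest member, its total size would be minimal
  obtain ⟨V₀, hV₀, hV₀c⟩ : ∃ V ∉ D, #V < #X := by
    by_contra! hcon
    have h1 : ∑ I ∈ D \ F, #I ≤ #(D \ F) * #X := by
      rw [← smul_eq_mul]
      exact Finset.sum_le_card_nsmul _ _ _ fun I hI => hXmax I (Finset.mem_sdiff.1 hI).1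
    have h2 : #(F \ D) * #X ≤ ∑ I ∈ F \ D, #I := by
      rw [← smul_eq_mul]
      exact Finset.card_nsmul_le_sum _ _ _ fun I hI => hcon I (Finset.mem_sdiff.1 hI).2
    have h3 : #(F \ D) = #(D \ F) := Finset.card_sdiff_comm hFD
    have h4 := Finset.sum_inter_add_sum_sdiff F D (fun I => #I)
    have h5 := Finset.sum_inter_add_sum_sdiff D F (fun I => #I)
    rw [Finset.inter_comm] at h5
    rw [h3] at h2
    omega
  have hXn : #X ≤ Fintype.card α := Finset.card_le_univ X
  obtain ⟨V₁, hV₁, hV₁c⟩ := Finset.exists_superset_card_eq (s := V₀) (n := #X - 1)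
    (by omega) (by omega)
  have hV₁D : V₁ ∉ D := fun h => hV₀ (hD hV₁ h)
  obtain ⟨Y₁, hY₁, hY₁c⟩ := Finset.exists_subset_card_eq (s := X) (n := #X - 1) (by omega)
  -- single exchanges connect all sets of size `#X - 1`, so one of them leaves `D`
  have key : ∀ d : ℕ, ∀ Y V : Finset α, Y ∈ D → V ∉ D → #Y = #X - 1 → #V = #X - 1 → #(V \ Y) = d →
      ∃ Y V : Finset α, Y ∈ D ∧ V ∉ D ∧ #Y = #X - 1 ∧ #V = #X - 1 ∧ #(V \ Y) = 1 := by
    intro d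
    induction d using Nat.strong_induction_on with
    | _ d ih =>
      intro Y V hY hV hYc hVc hd
      have hcard : #(V \ Y) = #(Y \ V) := Finset.card_sdiff_comm (by omega)
      have hne : (V \ Y).Nonempty := by
        rw [Finset.sdiff_nonempty]
        exact fun h => hV (hD h hY)
      obtain ⟨i, hi⟩ := hne
      obtain ⟨y, hy⟩ : (Y \ V).Nonempty := by
        rw [← Finset.card_pos, ← hcard]
        exact Finset.card_pos.2 ⟨i, hi⟩
      rw [Finset.mem_sdiff] at hi hy
      have hiy : i ∉ Y.erase y := fun h => hi.2 (Finset.mem_of_mem_erase h)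
      have hY'c : #(insert i (Y.erase y)) = #X - 1 := by
        rw [Finset.card_insert_of_notMem hiy, Finset.card_erase_add_one hy.1, hYc]
      by_cases hY' : insert i (Y.erase y) ∈ D
      · refine ih _ ?_ _ V hY' hV hY'c hVc rfl
        rw [← hd]
        apply Finset.card_lt_card
        rw [Finset.ssubset_iff_of_subset]
        · exact ⟨i, Finset.mem_sdiff.2 hi, by simp⟩
        · intro m hm
          simp only [Finset.mem_sdiff, Finset.mem_insert, Finset.mem_erase, not_or, not_and] at hm ⊢
          refine ⟨hm.1, fun hmY => hm.2.2 ?_ hmY⟩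
          rintro rfl
          exact hy.2 hm.1
      · refine ⟨Y, _, hY, hY', hYc, hY'c, ?_⟩
        have : insert i (Y.erase y) \ Y = {i} := by
          ext m
          simp only [Finset.mem_sdiff, Finset.mem_insert, Finset.mem_erase, Finset.mem_singleton]
          constructor
          · rintro ⟨h | h, h'⟩
            · exact h
            · exact absurd h.2 h'
          · rintro rfl
            exact ⟨Or.inl rfl, hi.2⟩
        rw [this, Finset.card_singleton]
  obtain ⟨Y, V, hY, hV, hYc, hVc, hVY⟩ := key _ Y₁ V₁ (hD hY₁ hX) hV₁D hY₁c hV₁c rfl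
  obtain ⟨i, hi⟩ := Finset.card_eq_one.1 hVY
  obtain ⟨W, hWV, hWmin⟩ := Finset.exists_le_minimal ({I ∈ V.powerset | I ∉ D} : Finset (Finset α))
    (a := V) (by simp [hV])
  have hWD : W ∉ D := (Finset.mem_filter.1 hWmin.1).2
  have hWV : W ⊆ V := hWV
  have hWsub : ∀ I, I ⊂ W → I ∈ D := by
    intro I hI
    by_contra hID
    have hI' := hWmin.2 (Finset.mem_filter.2 ⟨Finset.mem_powerset.2 (hI.1.trans hWV), hID⟩) hI.1
    exact hI.2 hI'
  by_cases hWeq : W = V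
  · subst hWeq
    exact ⟨X, W, hX, fun I hI hXI => (Finset.eq_of_subset_of_card_le hXI (hXmax I hI)).symm, hWD,
      hWsub, by omega, Or.inl (by omega)⟩
  · have hWc : #W < #V := Finset.card_lt_card (hWV.ssubset_of_ne hWeq)
    obtain ⟨X', hYX', hX'⟩ := Finset.exists_le_maximal D hY
    have hYX' : Y ⊆ X' := hYX'
    have hX'c := Finset.card_le_card hYX'
    refine ⟨X', W, hX'.1, fun I hI hXI => Finset.Subset.antisymm (hX'.2 hI hXI) hXI, hWD, hWsub,
      by omega, Or.inr ⟨i, ?_, ?_⟩⟩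
    · by_contra hiW
      apply hWD
      refine hD (fun m hm => ?_) hY
      by_contra hmY
      have : m ∈ V \ Y := Finset.mem_sdiff.2 ⟨hWV hm, hmY⟩
      rw [hi, Finset.mem_singleton] at this
      exact hiW (this ▸ hm)
    · intro m hm
      rw [Finset.mem_erase] at hm
      apply hYX'
      by_contra hmY
      have : m ∈ V \ Y := Finset.mem_sdiff.2 ⟨hWV hm.2, hmY⟩
      rw [hi, Finset.mem_singleton] at this
      exact hm.1 this

/-- Every power `2 ^ v` with `v` between the total size of some family `F` and that of a lower set
`D` of the same cardinality is a Hadamard minor of order `#F`. -/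
theorem exists_chi_minor {α : Type} [DecidableEq α] [Fintype α] (F : Finset (Finset α)) (v : ℕ)
    (hFv : ∑ I ∈ F, #I ≤ v) (D : Finset (Finset α)) (hD : IsLowerSet (D : Set (Finset α)))
    (hFD : #F = #D) (hvD : v ≤ ∑ I ∈ D, #I) :
    ∃ (ι : Type) (_ : Fintype ι) (_ : DecidableEq ι) (r c : ι → Finset α), Fintype.card ι = #F ∧
      Function.Injective r ∧ Function.Injective c ∧
        |(Matrix.of fun a b => chi (r a) (c b)).det| = 2 ^ v := by
  induction h : ∑ I ∈ D, #I using Nat.strong_induction_on generalizing D with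
  | _ t ih =>
    subst h
    rcases hvD.eq_or_lt with heq | hlt
    · refine ⟨D, inferInstance, inferInstance, (↑), (↑), by simp [hFD],
        Subtype.coe_injective, Subtype.coe_injective, ?_⟩
      refine (det_chi _ _ Subtype.coe_injective (fun a I hI => ⟨⟨I, hD hI a.2⟩, rfl⟩)).trans ?_
      have hT : (Matrix.of fun a b : D => zet a.1 b.1).det = 1 := by
        refine det_eq_one_of_rank _ (fun a => #a.1) (fun a => by simp [zet]) fun a b hab h => ?_
        have hsub : a.1 ⊆ b.1 := by
          by_contra hn
          exact h (if_neg hn)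
        exact Finset.card_lt_card (hsub.ssubset_of_ne fun h => hab (Subtype.ext h))
      refine (congrArg (fun z : ℤ => 2 ^ (∑ a : D, #a.1) * |z|) hT).trans ?_
      simp only [Finset.sum_coe_sort D (fun I => #I), ← heq]
      simp
    · obtain ⟨X, W, hX, hXmax, hW, hWmin, hWX, hor⟩ := exists_exchange D F hD hFD (by omega)
      have hWe : W ∉ D.erase X := fun h => hW (Finset.mem_of_mem_erase h)
      have hD' : IsLowerSet (insert W (D.erase X) : Set (Finset α)) := by
        intro I K hKI hI
        have hKI : K ⊆ I := hKI
        simp only [Set.mem_insert_iff, Finset.mem_coe, Finset.mem_erase] at hI ⊢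
        rcases hI with rfl | hI
        · by_cases hK : K = I
          · exact Or.inl hK
          · refine Or.inr ⟨?_, hWmin K (hKI.ssubset_of_ne hK)⟩
            rintro rfl
            exact absurd (Finset.card_le_card hKI) (by omega)
        · right
          refine ⟨?_, hD hKI hI.2⟩
          rintro rfl
          exact hI.1 (hXmax I hI.2 hKI)
      have hD'c : IsLowerSet ((insert W (D.erase X) : Finset (Finset α)) : Set (Finset α)) := by
        simpa using hD'
      have hcard : #(insert W (D.erase X)) = #D := by
        rw [Finset.card_insert_of_notMem hWe, Finset.card_erase_add_one hX]
      have hsum : ∑ I ∈ insert W (D.erase X), #I + #X = ∑ I ∈ D, #I + #W := by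
        rw [Finset.sum_insert hWe, ← Finset.sum_erase_add D (fun I => #I) hX]
        ring
      by_cases hv : v ≤ ∑ I ∈ insert W (D.erase X), #I
      · exact ih _ (by omega) _ hD'c (by rw [hcard, hFD]) hv rfl
      · rcases hor with h1 | ⟨i, hiW, hi⟩
        · omega
        · obtain ⟨τ, hτ, hdet⟩ := exists_det_zet_eq_two_pow D hD ⟨X, hX⟩ W hW i hiW hi
            (v - ∑ I ∈ insert W (D.erase X), #I) (by simp only; omega)
          have hr : Function.Injective (fun a : D => if a = ⟨X, hX⟩ then W else a.1) := by
            intro a b hab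
            simp only at hab
            split_ifs at hab with h1 h2 h2
            · rw [h1, h2]
            · exact absurd (hab ▸ b.2) hW
            · exact absurd (hab ▸ a.2) hW
            · exact Subtype.ext hab
          have himg : Finset.univ.image (fun a : D => if a = ⟨X, hX⟩ then W else a.1) =
              insert W (D.erase X) := by
            apply Finset.eq_of_subset_of_card_le
            · intro I hI
              obtain ⟨a, -, rfl⟩ := Finset.mem_image.1 hI
              split_ifs with ha
              · exact Finset.mem_insert_self _ _
              · exact Finset.mem_insert_of_mem
                  (Finset.mem_erase.2 ⟨fun h => ha (Subtype.ext h), a.2⟩)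
            · rw [Finset.card_image_of_injective _ hr, hcard]
              simp
          refine ⟨D, inferInstance, inferInstance, _, τ, by simp [hFD], hr, hτ, ?_⟩
          refine (det_chi _ _ hr ?_).trans ?_
          rotate_left
          · rw [hdet, ← pow_add, ← Finset.sum_image (f := fun I : Finset α => #I)
              (g := fun a : D => if a = ⟨X, hX⟩ then W else a.1) hr.injOn, himg]
            congr 1
            omega
          · intro a I hI
            have ha : (if a = ⟨X, hX⟩ then W else a.1) ∈ insert W (D.erase X) := by
              rw [← himg]
              exact Finset.mem_image_of_mem _ (Finset.mem_univ a)
            have hI' : I ∈ insert W (D.erase X) := hD'c hI ha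
            rw [← himg] at hI'
            obtain ⟨b, -, hb⟩ := Finset.mem_image.1 hI'
            exact ⟨b, hb⟩

/-! ### Bounds on the covolume -/

theorem det_dvd_of_mem_span {ι : Type*} [Fintype ι] [DecidableEq ι] (B C : ι → ι → ℤ)
    (h : ∀ i, C i ∈ Submodule.span ℤ (Set.range B)) :
    (Matrix.of B).det ∣ (Matrix.of C).det := by
  choose c hc using fun i => (Submodule.mem_span_range_iff_exists_fun ℤ).1 (h i)
  have : Matrix.of C = Matrix.of c * Matrix.of B := by
    ext i j
    rw [Matrix.mul_apply, Matrix.of_apply, ← hc i]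
    simp
  rw [this, Matrix.det_mul]
  exact Dvd.intro_left _ rfl

/-- Character differences are integer combinations of the scaled nonconstant monomials. -/
theorem chi_sub_mem_span {α ι : Type*} [DecidableEq α] (a : ι → Finset α) (x x' : Finset α) :
    (fun j => chi x (a j) - chi x' (a j)) ∈ Submodule.span ℤ
      (Set.range fun (I : {I : Finset α // I ≠ ∅}) j => 2 ^ #I.1 * zet I.1 (a j)) := by
  have key : ∀ x : Finset α, (fun j => chi x (a j) - 1) ∈ Submodule.span ℤ
      (Set.range fun (I : {I : Finset α // I ≠ ∅}) j => 2 ^ #I.1 * zet I.1 (a j)) := by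
    intro x
    have : (fun j => chi x (a j) - 1) = ∑ I ∈ x.powerset.erase ∅,
        (-1 : ℤ) ^ #I • fun j => 2 ^ #I * zet I (a j) := by
      ext j
      rw [chi_expand, ← Finset.sum_erase_add _ _ (Finset.empty_mem_powerset x), Finset.sum_apply]
      simp only [Pi.smul_apply, smul_eq_mul, ← mul_assoc, ← mul_pow]
      simp [zet]
    rw [this]
    exact Submodule.sum_mem _ fun I hI => Submodule.smul_mem _ _
      (Submodule.subset_span ⟨⟨I, Finset.ne_of_mem_erase hI⟩, rfl⟩)
  convert Submodule.sub_mem _ (key x) (key x') using 1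
  ext j
  simp

/-- The scaled nonconstant monomials are integer combinations of character differences. -/
theorem zet_mem_span {α ι : Type*} [DecidableEq α] (a : ι → Finset α) (I : Finset α)
    (hI : I ≠ ∅) :
    (fun j => 2 ^ #I * zet I (a j)) ∈ Submodule.span ℤ
      {d : ι → ℤ | ∃ x x', d = fun j => chi x (a j) - chi x' (a j)} := by
  have : (fun j => 2 ^ #I * zet I (a j)) = ∑ J ∈ I.powerset,
      (-1 : ℤ) ^ #J • fun j => chi J (a j) - chi ∅ (a j) := by
    ext j
    rw [← zet_expand, Finset.sum_apply]
    simp only [Pi.smul_apply, smul_eq_mul, mul_sub]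
    rw [Finset.sum_sub_distrib, ← Finset.sum_mul,
      Finset.sum_powerset_neg_one_pow_card_of_nonempty (Finset.nonempty_iff_ne_empty.2 hI)]
    simp
  rw [this]
  exact Submodule.sum_mem _ fun J _ => Submodule.smul_mem _ _ (Submodule.subset_span ⟨J, ∅, rfl⟩)

/-- Expanding the determinant over the scaled monomials, every term is divisible by `2` to the
total size of the monomials involved; so some family of distinct monomials has total size at most
the exponent of the covolume. -/
theorem exists_family_le {α ι : Type*} [DecidableEq α] [Fintype α] [Fintype ι] [DecidableEq ι]
    (a : ι → Finset α) (B : ι → ι → ℤ)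
    (hB : ∀ i, B i ∈ Submodule.span ℤ
      (Set.range fun (I : {I : Finset α // I ≠ ∅}) j => 2 ^ #I.1 * zet I.1 (a j)))
    (v : ℕ) (hv : |(Matrix.of B).det| = 2 ^ v) :
    ∃ φ : ι → Finset α, Function.Injective φ ∧ (∀ i, φ i ≠ ∅) ∧ ∑ i, #(φ i) ≤ v := by
  by_contra! hcon
  choose c hc using fun i => (Submodule.mem_span_range_iff_exists_fun ℤ).1 (hB i)
  have hdvd : (2 : ℤ) ^ (v + 1) ∣ (Matrix.of B).det := by
    have h1 : Matrix.of B = Matrix.of fun i => ∑ I : {I : Finset α // I ≠ ∅},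
        c i I • fun j => 2 ^ #I.1 * zet I.1 (a j) := by
      ext i j
      rw [Matrix.of_apply, ← hc i]
      rfl
    have h2 : (Matrix.of B).det = ∑ φ : ι → {I : Finset α // I ≠ ∅},
        (Matrix.of fun i => c i (φ i) • fun j => 2 ^ #(φ i).1 * zet (φ i).1 (a j)).det := by
      rw [h1]
      exact MultilinearMap.map_sum (Matrix.detRowAlternating (R := ℤ) (n := ι)).toMultilinearMap
        (fun i (I : {I : Finset α // I ≠ ∅}) => c i I • fun j => 2 ^ #I.1 * zet I.1 (a j))
    rw [h2]
    refine Finset.dvd_sum fun φ _ => ?_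
    have h3 : (Matrix.of fun i => c i (φ i) • fun j => 2 ^ #(φ i).1 * zet (φ i).1 (a j)) =
        Matrix.diagonal (fun i => c i (φ i) * 2 ^ #(φ i).1) *
          Matrix.of fun i j => zet (φ i).1 (a j) := by
      ext i j
      simp [mul_assoc]
    rw [h3, Matrix.det_mul, Matrix.det_diagonal, Finset.prod_mul_distrib,
      Finset.prod_pow_eq_pow_sum]
    by_cases hφ : Function.Injective φ
    · have := hcon (fun i => (φ i).1) (Subtype.val_injective.comp hφ)
        (fun i => Finset.nonempty_iff_ne_empty.2 (φ i).2)
      exact Dvd.dvd.mul_right (Dvd.dvd.mul_left (pow_dvd_pow 2 this) _) _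
    · obtain ⟨i, i', hii, hne⟩ : ∃ i i', φ i = φ i' ∧ i ≠ i' := by
        simpa [Function.Injective] using hφ
      rw [Matrix.det_zero_of_row_eq hne (by ext j; simp [hii])]
      simp
  rw [← dvd_abs, hv] at hdvd
  have := Int.le_of_dvd (by positivity) hdvd
  rw [pow_succ] at this
  have : (0 : ℤ) < 2 ^ v := by positivity
  omega

/-- The standard monomials of `{∅} ∪ range a`, scaled, lie in the lattice and form a lower set whose
total size bounds the exponent of the covolume. -/
theorem exists_lower_set_dvd {α ι : Type*} [DecidableEq α] [Fintype α] [Fintype ι] [DecidableEq ι]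
    (a : ι → Finset α) (ha : Function.Injective a) (hane : ∀ j, a j ≠ ∅) (B : ι → ι → ℤ)
    (hB : ∀ x x', (fun j => chi x (a j) - chi x' (a j)) ∈ Submodule.span ℤ (Set.range B)) :
    ∃ D : Finset (Finset α), IsLowerSet (D : Set (Finset α)) ∧ #D = Fintype.card ι + 1 ∧
      (Matrix.of B).det ∣ 2 ^ (∑ I ∈ D, #I) := by
  obtain ⟨sh, hsh⟩ := exists_standard_monomials (Finset.univ : Finset α)
  have hemp : ∅ ∉ Finset.univ.image a := by simpa using hane
  have hSc : #(insert ∅ (Finset.univ.image a)) = Fintype.card ι + 1 := by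
    rw [Finset.card_insert_of_notMem hemp, Finset.card_image_of_injective _ ha, Finset.card_univ]
  obtain ⟨-, hcard, hlow, -, hexp⟩ := hsh (insert ∅ (Finset.univ.image a)) (by simp)
  generalize sh (insert ∅ (Finset.univ.image a)) = D at hcard hlow hexp
  rw [hSc] at hcard
  refine ⟨D, hlow, hcard, ?_⟩
  have hDe : ∅ ∈ D := by
    obtain ⟨I, hI⟩ := Finset.card_pos.1 (show 0 < #D by omega)
    exact hlow (Finset.empty_subset I) hI
  have hc : Fintype.card ι = Fintype.card (D.erase ∅ : Finset (Finset α)) := by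
    rw [Fintype.card_coe, Finset.card_erase_of_mem hDe]
    omega
  let e := Fintype.equivOfCardEq hc
  have hsumD : ∀ f : Finset α → ℤ, ∑ I ∈ D, f I = ∑ i, f (e i).1 + f ∅ := by
    intro f
    rw [← Finset.sum_erase_add D f hDe, ← Finset.sum_coe_sort, ← e.sum_comp]
  -- the indicator functions of the points `a i` invert the monomial matrix
  choose c hcs using fun i => hexp (fun s => if s = a i then 1 else 0)
  have hc0 : ∀ i, c i ∅ = 0 := by
    intro i
    have h := hcs i ∅ (Finset.mem_insert_self _ _)
    rw [if_neg (fun h => hane i h.symm), hsumD] at h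
    have h0 : ∀ k, zet (e k).1 ∅ = 0 := fun k => by
      have := Finset.ne_of_mem_erase (e k).2
      simp [zet, this]
    simp only [h0, mul_zero, Finset.sum_const_zero, zero_add] at h
    simpa [zet] using h.symm
  have hQ : (Matrix.of fun i k => c i (e k).1) * (Matrix.of fun k j => zet (e k).1 (a j)) = 1 := by
    ext i j
    rw [Matrix.mul_apply, Matrix.one_apply]
    have h := hcs i (a j) (Finset.mem_insert_of_mem (Finset.mem_image_of_mem a (Finset.mem_univ j)))
    rw [hsumD, hc0, zero_mul, add_zero] at h
    simp only [Matrix.of_apply]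
    rw [← h]
    simp [ha.eq_iff, eq_comm]
  have hunit : IsUnit (Matrix.of fun k j => zet (e k).1 (a j)).det := by
    refine IsUnit.of_mul_eq_one_right (Matrix.of fun i k => c i (e k).1).det ?_
    rw [← Matrix.det_mul, hQ, Matrix.det_one]
  have hdvd := det_dvd_of_mem_span B (fun k j => 2 ^ #(e k).1 * zet (e k).1 (a j)) fun k =>
    Submodule.span_le.2 (by rintro d ⟨x, x', rfl⟩; exact hB x x')
      (zet_mem_span a (e k).1 (Finset.ne_of_mem_erase (e k).2))
  have hP : (Matrix.of fun k j => 2 ^ #(e k).1 * zet (e k).1 (a j)) =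
      Matrix.diagonal (fun k => (2 : ℤ) ^ #(e k).1) *
        Matrix.of fun k j => zet (e k).1 (a j) := by
    ext k j
    simp
  rw [hP, Matrix.det_mul, hunit.dvd_mul_right, Matrix.det_diagonal,
    Finset.prod_pow_eq_pow_sum] at hdvd
  rw [← Finset.sum_erase_add D (fun I => #I) hDe, ← Finset.sum_coe_sort,
    ← e.sum_comp (fun I => #I.1), Finset.card_empty, add_zero]
  exact hdvd

/-! ### Binary expansions -/

/-- The set of positions of the binary digits of `x` equal to `1`. -/
def bits (n : ℕ) (x : Fin (2 ^ n)) : Finset (Fin n) := {m | bin n x m = 1}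

theorem bits_bijective (n : ℕ) : Function.Bijective (bits n) := by
  rw [Fintype.bijective_iff_injective_and_card]
  refine ⟨fun x y hxy => ?_, by simp⟩
  apply Fin.ext
  apply Nat.eq_of_testBit_eq
  intro i
  by_cases hi : i < n
  · have h : (⟨i, hi⟩ : Fin n) ∈ bits n x ↔ (⟨i, hi⟩ : Fin n) ∈ bits n y := by rw [hxy]
    rw [bits, bits, Finset.mem_filter_univ, Finset.mem_filter_univ] at h
    rw [Nat.testBit_eq_decide_div_mod_eq, Nat.testBit_eq_decide_div_mod_eq]
    exact decide_eq_decide.2 h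
  · have h2 : 2 ^ n ≤ 2 ^ i := Nat.pow_le_pow_right (by norm_num) (by omega)
    rw [Nat.testBit_lt_two_pow (x.2.trans_le h2), Nat.testBit_lt_two_pow (y.2.trans_le h2)]

theorem bin_eq_ite (n : ℕ) (x : Fin (2 ^ n)) (m : Fin n) :
    bin n x m = if m ∈ bits n x then 1 else 0 := by
  have : bin n x m < 2 := Nat.mod_lt _ (by norm_num)
  simp only [bits, Finset.mem_filter, Finset.mem_univ, true_and]
  split_ifs <;> omega

theorem sylvester_eq_chi (n : ℕ) (x y : Fin (2 ^ n)) :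
    sylvester n x y = chi (bits n x) (bits n y) := by
  unfold sylvester chi
  congr 1
  simp only [bin_eq_ite, ← ite_and, mul_ite, mul_one, mul_zero]
  rw [Finset.sum_boole, Nat.cast_id]
  congr 1
  ext m
  simp [and_comm]

theorem pauliK_eq_chi (n N : ℕ) (A : Matrix (Fin n) (Fin N) (ZMod 2)) (x : Fin (2 ^ n))
    (j : Fin N) : pauliK n N A x j = chi (bits n x) {m | A m j = 1} := by
  unfold pauliK chi
  congr 1
  have h2 : ∀ z : ZMod 2, z.val = if z = 1 then 1 else 0 := by decide
  simp only [bin_eq_ite, h2, ← ite_and, mul_ite, mul_one, mul_zero]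
  rw [Finset.sum_boole, Nat.cast_id]
  congr 1
  ext m
  simp [and_comm]

/-! ### The covolume as a Hadamard minor -/

/-- the lattice volume is a Hadamard minor: there is an `(N+1) × (N+1)`
submatrix `M` of the Sylvester Hadamard matrix `H_{2^n}` (given by injections selecting `N+1`
rows and `N+1` columns) with `V_U = |det M|`, where `V_U = |det B|` for `B` a `ℤ`-basis of
`lat(W) = span_ℤ{k_x − k_{x'}}`. -/
theorem stmt_16 (n N : ℕ) (hn : 1 ≤ n) (hnN : n ≤ N) (hN : N ≤ 2 ^ n - 1)
    (A : Matrix (Fin n) (Fin N) (ZMod 2))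
    (hinj : Function.Injective (fun j : Fin N => fun m => A m j))
    (hnz : ∀ j : Fin N, (fun m => A m j) ≠ 0)
    (B : Fin N → Fin N → ℤ)
    (hBind : LinearIndependent ℤ B)
    (hBspan : Submodule.span ℤ (Set.range B) =
      Submodule.span ℤ
        {d : Fin N → ℤ | ∃ x x', d = fun j => pauliK n N A x j - pauliK n N A x' j}) :
    ∃ ρ σ : Fin (N + 1) → Fin (2 ^ n),
      Function.Injective ρ ∧ Function.Injective σ ∧
        |(Matrix.of B).det| =
          |(Matrix.of fun i j : Fin (N + 1) => sylvester n (ρ i) (σ j)).det| := by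
  let a : Fin N → Finset (Fin n) := fun j => {m | A m j = 1}
  have ha : Function.Injective a := by
    intro j j' h
    apply hinj
    funext m
    have h1 : m ∈ a j ↔ m ∈ a j' := by rw [h]
    have h2 : ∀ z w : ZMod 2, (z = 1 ↔ w = 1) → z = w := by decide
    exact h2 _ _ (by simpa [a] using h1)
  have hane : ∀ j, a j ≠ ∅ := by
    intro j h
    apply hnz j
    ext m
    have h1 : m ∉ a j := by simp [h]
    have h2 : ∀ z : ZMod 2, z ≠ 1 → z = 0 := by decide
    exact h2 _ (by simpa [a] using h1)
  have hset : {d : Fin N → ℤ | ∃ x x', d = fun j => pauliK n N A x j - pauliK n N A x' j} =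
      {d | ∃ x x', d = fun j => chi x (a j) - chi x' (a j)} := by
    ext d
    simp only [Set.mem_ofPred_eq, pauliK_eq_chi]
    rw [← (bits_bijective n).surjective.exists₂ (p := fun x x' => d = fun j =>
      chi x (a j) - chi x' (a j))]
  rw [hset] at hBspan
  obtain ⟨D, hD, hDc, hdvd⟩ := exists_lower_set_dvd a ha hane B fun x x' => by
    rw [hBspan]
    exact Submodule.subset_span ⟨x, x', rfl⟩
  obtain ⟨v, hvD, hv⟩ : ∃ v ≤ ∑ I ∈ D, #I, |(Matrix.of B).det| = 2 ^ v := by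
    have h : (Matrix.of B).det.natAbs ∣ 2 ^ (∑ I ∈ D, #I) := by
      have := Int.natAbs_dvd_natAbs.2 hdvd
      simpa [Int.natAbs_pow] using this
    obtain ⟨v, hv, hv'⟩ := (Nat.dvd_prime_pow Nat.prime_two).1 h
    refine ⟨v, hv, ?_⟩
    rw [Int.abs_eq_natAbs, hv']
    simp
  obtain ⟨φ, hφ, hφne, hφv⟩ := exists_family_le a B (fun i => by
    have h : B i ∈ Submodule.span ℤ (Set.range B) := Submodule.subset_span ⟨i, rfl⟩
    rw [hBspan] at h
    refine Submodule.span_le.2 ?_ h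
    rintro d ⟨x, x', rfl⟩
    exact chi_sub_mem_span a x x') v hv
  have hemp : ∅ ∉ Finset.univ.image φ := by simpa using hφne
  have hFc : #(insert ∅ (Finset.univ.image φ)) = N + 1 := by
    rw [Finset.card_insert_of_notMem hemp, Finset.card_image_of_injective _ hφ, Finset.card_univ,
      Fintype.card_fin]
  rw [Fintype.card_fin] at hDc
  obtain ⟨ι, _, _, r, c, hι, hr, hc, hdet⟩ := exists_chi_minor (insert ∅ (Finset.univ.image φ)) v
    (by rw [Finset.sum_insert hemp, Finset.sum_image hφ.injOn]; simpa using hφv) D hD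
    (hFc.trans hDc.symm) hvD
  -- pull the minor back along the bijection between indices and their supports
  let e := (Fintype.equivFinOfCardEq (hι.trans hFc)).symm
  let b := (Equiv.ofBijective (bits n) (bits_bijective n)).symm
  have hb : ∀ s, bits n (b s) = s := (Equiv.ofBijective (bits n) (bits_bijective n)).apply_symm_apply
  refine ⟨fun i => b (r (e i)), fun i => b (c (e i)), b.injective.comp (hr.comp e.injective),
    b.injective.comp (hc.comp e.injective), ?_⟩
  rw [hv, ← hdet, ← Matrix.det_submatrix_equiv_self e]
  congr 2
  ext i j
  simp [sylvester_eq_chi, hb]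
end

section
/- Bounds and extreme cases for the lattice volume: the volume satisfies 2^n ≤ 2^N ≤ V_U ≤ (N+1)^{(N+1)/2} ≤ (2^n)^{2^{n−1}}. Moreover, V_U = 2^N holds if and only if N = n and A is a square matrix of full rank over the field ℤ/2; and if V_U attains the maximum possible value (2^n)^{2^{n−1}}, then N = 2^n − 1. -/
/-!
Let `b_x` be the binary expansion of `x` and `c_x := b_x A` a codeword of the row space of `A`
over `ℤ/2`, with entries lifted to `{0, 1}`. Then `k_x = 1 - 2 c_x`, and since `c_0 = 0` the lattice
is spanned by the vectors `-2 c_x`. So `B = 2 (C W)` with `C` integral and `W` the matrix of rows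
`-c_x`, whence `|det B| = 2^N |det (C W)|`.

* Lower bound: `det (C W)` is a nonzero integer.
* Upper bound: expanding `det B` multilinearly in the rows `k_x - k_0`, some `N` of these differences
  have a nonzero determinant `D`, and `det B ∣ D`. Bordering by a first row `(1, k_0)` and a first
  column of ones turns `D` into the determinant of an `(N+1) × (N+1)` sign matrix, so Hadamard's
  inequality (`hadamard_sign`) gives `|D| ≤ (N+1)^((N+1)/2)`. As `N + 1 ≤ 2^n`, this is at most
  `(2^n)^(2^(n-1))`, strictly so unless `N = 2^n - 1`.
* Equality `|det B| = 2^N` makes `det (C W) = ±1`, so `C W` has rank `N` modulo `2`; but modulo `2`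
  its rows are combinations of rows of `A`, so `N ≤ rank A ≤ n`. Conversely, if `N = n = rank A` then
  every standard basis vector is a codeword, so every `2 e_j` lies in the lattice and
  `det B ∣ 2^N`.
-/

open Matrix Finset MeasureTheory

/-- Hadamard's inequality for sign matrices. -/
lemma hadamard_sign {k : ℕ} (E : Matrix (Fin k) (Fin k) ℤ) (hE : ∀ i j, E i j ^ 2 = 1) :
    |(E.det : ℝ)| ≤ (Real.sqrt k) ^ k := by
  have : Fact (Module.finrank ℝ (EuclideanSpace ℝ (Fin k)) = k) := ⟨by simp⟩
  let b := EuclideanSpace.basisFun (Fin k) ℝ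
  let v : Fin k → EuclideanSpace ℝ (Fin k) := fun i => WithLp.toLp 2 (fun j => (E i j : ℝ))
  let o : Orientation ℝ (EuclideanSpace ℝ (Fin k)) (Fin k) := b.toBasis.orientation
  have h := o.abs_volumeForm_apply_le v
  rw [o.volumeForm_robust' b v, Module.Basis.det_apply] at h
  have h1 : b.toBasis.toMatrix v = (E.map (Int.castRingHom ℝ))ᵀ := by
    ext i j
    simp [Module.Basis.toMatrix_apply, b, v]
  have h2 : ∀ i, ‖v i‖ = Real.sqrt k := by
    intro i
    rw [EuclideanSpace.norm_eq]
    congr 1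
    have : ∀ j, ‖(v i) j‖ ^ 2 = 1 := by
      intro j
      have := hE i j
      simp only [v, Real.norm_eq_abs, sq_abs]
      exact_mod_cast this
    rw [Finset.sum_congr rfl fun j _ => this j]
    simp
  rw [h1, det_transpose, ← RingHom.mapMatrix_apply, ← RingHom.map_det] at h
  simpa [h2] using h

/-- The codeword `b_x A` over `ℤ/2`, where `b_x` is the binary expansion of `x`. -/
def codeword (n N : ℕ) (A : Matrix (Fin n) (Fin N) (ZMod 2)) :
    Matrix (Fin (2 ^ n)) (Fin N) (ZMod 2) :=
  (Matrix.of fun x m => (bin n x m : ZMod 2)) * A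

/-- The integer matrix with rows `-c_x`, where `c_x` is the lift of the codeword of `x` to `{0, 1}`,
so that `k_x = 1 + 2 W_x`. -/
def halfRows (n N : ℕ) (A : Matrix (Fin n) (Fin N) (ZMod 2)) : Matrix (Fin (2 ^ n)) (Fin N) ℤ :=
  Matrix.of fun x j => -((codeword n N A x j).val : ℤ)

lemma pauliK_eq (n N : ℕ) (A : Matrix (Fin n) (Fin N) (ZMod 2)) (x : Fin (2 ^ n)) (j : Fin N) :
    pauliK n N A x j = 1 + 2 * halfRows n N A x j := by
  have h : codeword n N A x j = ((∑ m, bin n x m * (A m j).val : ℕ) : ZMod 2) := by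
    simp [codeword, Matrix.mul_apply]
  simp only [pauliK, halfRows, of_apply, h, ZMod.val_natCast]
  generalize (∑ m, bin n x m * (A m j).val) = s
  rcases Nat.even_or_odd s with hs | hs
  · simp [hs.neg_one_pow, Nat.even_iff.mp hs]
  · simp [hs.neg_one_pow, Nat.odd_iff.mp hs]

lemma pauliK_sq (n N : ℕ) (A : Matrix (Fin n) (Fin N) (ZMod 2)) (x : Fin (2 ^ n)) (j : Fin N) :
    pauliK n N A x j ^ 2 = 1 := by
  rw [pauliK, ← pow_mul, mul_comm, pow_mul]; simp

lemma halfRows_zero (n N : ℕ) (A : Matrix (Fin n) (Fin N) (ZMod 2)) (j : Fin N) :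
    halfRows n N A 0 j = 0 := by
  simp [halfRows, codeword, Matrix.mul_apply, bin]

/-- Differencing against `x' = 0` alone already spans the lattice. -/
lemma span_diff_eq (n N : ℕ) (A : Matrix (Fin n) (Fin N) (ZMod 2)) :
    Submodule.span ℤ
        {d : Fin N → ℤ | ∃ x x', d = fun j => pauliK n N A x j - pauliK n N A x' j} =
      Submodule.span ℤ (Set.range fun x => (2 : ℤ) • (halfRows n N A) x) := by
  apply le_antisymm
  · rw [Submodule.span_le]
    rintro d ⟨x, x', rfl⟩
    have : (fun j => pauliK n N A x j - pauliK n N A x' j) =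
        (2 : ℤ) • (halfRows n N A) x - (2 : ℤ) • (halfRows n N A) x' := by
      ext j; simp [pauliK_eq]
    rw [this]
    exact Submodule.sub_mem _ (Submodule.subset_span ⟨x, rfl⟩) (Submodule.subset_span ⟨x', rfl⟩)
  · apply Submodule.span_mono
    rintro d ⟨x, rfl⟩
    refine ⟨x, 0, ?_⟩
    ext j; simp [pauliK_eq, halfRows_zero]

lemma bin_surjective (n : ℕ) (v : Fin n → ZMod 2) :
    ∃ x : Fin (2 ^ n), ∀ m, (bin n x m : ZMod 2) = v m := by
  refine ⟨finFunctionFinEquiv (fun m => (v m : Fin 2)), fun m => ?_⟩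
  have h := congrFun (finFunctionFinEquiv.symm_apply_apply (fun m => (v m : Fin 2))) m
  have h2 : bin n (finFunctionFinEquiv (fun m => (v m : Fin 2))) m = (v m).val := by
    conv_rhs => rw [← h]
    rfl
  rw [h2]; simp

/-- Vectors in the row lattice of `B` are integer combinations of the rows of `B`, so the determinant
of `N` of them is a multiple of `det B`. -/
lemma det_dvd_of_mem_span_s17 {N : ℕ} (B D : Matrix (Fin N) (Fin N) ℤ)
    (h : ∀ i, D i ∈ Submodule.span ℤ (Set.range B)) : B.det ∣ D.det := by
  have h' := fun i => (Submodule.mem_span_range_iff_exists_fun ℤ).mp (h i)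
  choose M hM using h'
  have : D = Matrix.of M * B := by
    ext i j
    rw [← hM i]
    simp [Matrix.mul_apply]
  rw [this, det_mul]
  exact dvd_mul_left _ _

/-- A nonzero determinant of integer combinations of vectors `w_x` forces some choice of the `w_x`
to have a nonzero determinant. -/
lemma exists_det_ne_zero {N : ℕ} {κ : Type*} [Fintype κ] (w : κ → Fin N → ℤ)
    (C : Fin N → κ → ℤ) (h : (Matrix.of fun i => ∑ x, C i x • w x).det ≠ 0) :
    ∃ f : Fin N → κ, (Matrix.of fun i => w (f i)).det ≠ 0 := by
  classical
  by_contra! hf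
  apply h
  let φ : MultilinearMap ℤ (fun _ : Fin N => Fin N → ℤ) ℤ :=
    (Matrix.detRowAlternating : (Fin N → ℤ) [⋀^Fin N]→ₗ[ℤ] ℤ).toMultilinearMap
  have : φ (fun i => ∑ x, C i x • w x) = 0 := by
    rw [MultilinearMap.map_sum]
    refine Finset.sum_eq_zero fun r _ => ?_
    rw [MultilinearMap.map_smul_univ]
    have := hf r
    change φ (fun i => w (r i)) = 0 at this
    rw [this, smul_zero]
  exact this

/-- The determinant of `N` differences `k_{f i} - k_0` is that of a sign matrix of order `N + 1`,
so Hadamard's inequality bounds it. -/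
lemma det_diff_le (n N : ℕ) (A : Matrix (Fin n) (Fin N) (ZMod 2)) (f : Fin N → Fin (2 ^ n)) :
    |((Matrix.of fun i => (2 : ℤ) • (halfRows n N A) (f i)).det : ℝ)| ≤
      (Real.sqrt ((N + 1 : ℕ) : ℝ)) ^ (N + 1) := by
  let E : Matrix (Unit ⊕ Fin N) (Unit ⊕ Fin N) ℤ :=
    fromBlocks 1 (Matrix.of fun _ j => pauliK n N A 0 j) (Matrix.of fun _ _ => 1)
      (Matrix.of fun i j => pauliK n N A (f i) j)
  have hdet : E.det = (Matrix.of fun i => (2 : ℤ) • (halfRows n N A) (f i)).det := by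
    rw [det_fromBlocks_one₁₁]
    congr 1
    ext i j
    simp [Matrix.mul_apply, pauliK_eq, halfRows_zero]
  let e : Fin (N + 1) ≃ Unit ⊕ Fin N := Fintype.equivOfCardEq (by simp [add_comm])
  rw [← hdet, ← det_submatrix_equiv_self e E]
  apply hadamard_sign
  intro i j
  rw [submatrix_apply]
  rcases e i with a | a <;> rcases e j with b | b <;> simp [E, pauliK_sq]

lemma halfRows_cast (n N : ℕ) (A : Matrix (Fin n) (Fin N) (ZMod 2)) :
    (halfRows n N A).map (Int.castRingHom (ZMod 2)) = codeword n N A := by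
  ext x j
  simp [halfRows, ZMod.neg_eq_self_mod_two]

/-- When `A` is square of full rank, every standard basis vector is a codeword. -/
lemma exists_halfRows_single (n : ℕ) (A : Matrix (Fin n) (Fin n) (ZMod 2)) (hA : A.rank = n)
    (i : Fin n) : ∃ x, (halfRows n n A) x = -(Pi.single i 1 : Fin n → ℤ) := by
  have htop : LinearMap.range (Aᵀ).mulVecLin = ⊤ := by
    apply Submodule.eq_top_of_finrank_eq
    change (Aᵀ).rank = _
    rw [rank_transpose, hA]; simp
  obtain ⟨v, hv⟩ := LinearMap.range_eq_top.mp htop (Pi.single i 1)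
  obtain ⟨x, hx⟩ := bin_surjective n v
  refine ⟨x, ?_⟩
  ext j
  have h1 : codeword n n A x j = (Pi.single i 1 : Fin n → ZMod 2) j := by
    rw [← hv]
    simp [codeword, Matrix.mul_apply, hx, Matrix.vecMul, dotProduct]
  simp only [halfRows, of_apply, h1, Pi.neg_apply]
  by_cases hij : j = i
  · subst hij; simp [ZMod.val_one]
  · simp [hij]

/-- The Hadamard bound at order `N + 1 ≤ 2^n`; it is strict for `N + 1 < 2^n`. -/
lemma hadamard_le_top (n N : ℕ) (hn : 1 ≤ n) (hN : N + 1 ≤ 2 ^ n) :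
    ((N : ℝ) + 1) ^ (((N : ℝ) + 1) / 2) ≤ ((2 : ℝ) ^ n) ^ (2 ^ (n - 1)) ∧
    (N + 1 < 2 ^ n →
      ((N : ℝ) + 1) ^ (((N : ℝ) + 1) / 2) < ((2 : ℝ) ^ n) ^ (2 ^ (n - 1))) := by
  have hpow : (2 : ℝ) ^ n = 2 * 2 ^ (n - 1) := by
    rw [← pow_succ', Nat.sub_add_cancel hn]
  have hN' : (N : ℝ) + 1 ≤ 2 ^ n := by exact_mod_cast hN
  have h1 : (1 : ℝ) ≤ 2 ^ n := one_le_pow₀ (by norm_num)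
  have hpos : (0 : ℝ) < N + 1 := by positivity
  have hR : ((2 : ℝ) ^ n) ^ (2 ^ (n - 1)) = ((2 : ℝ) ^ n) ^ ((2 : ℝ) ^ n / 2) := by
    rw [← Real.rpow_natCast ((2 : ℝ) ^ n)]
    congr 1
    push_cast
    linarith
  have hstep : ((2 : ℝ) ^ n) ^ (((N : ℝ) + 1) / 2) ≤ ((2 : ℝ) ^ n) ^ ((2 : ℝ) ^ n / 2) :=
    Real.rpow_le_rpow_of_exponent_le h1 (by linarith)
  rw [hR]
  refine ⟨(Real.rpow_le_rpow hpos.le hN' (by positivity)).trans hstep, fun hlt => ?_⟩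
  have hlt' : (N : ℝ) + 1 < 2 ^ n := by exact_mod_cast hlt
  exact (Real.rpow_lt_rpow hpos.le hlt' (by positivity)).trans_le hstep

/-- bounds and extreme cases for the lattice volume
`V_U = |det B|` (covolume of `lat(W) = span_ℤ{k_x − k_{x'}}`):
`2^n ≤ 2^N ≤ V_U ≤ (N+1)^{(N+1)/2} ≤ (2^n)^{2^{n−1}}`; moreover `V_U = 2^N` iff `N = n` and
`A` has full rank `n` over `ℤ/2`, and if `V_U = (2^n)^{2^{n−1}}` then `N = 2^n − 1`. -/
theorem stmt_17 (n N : ℕ) (hn : 1 ≤ n) (hnN : n ≤ N) (hN : N ≤ 2 ^ n - 1)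
    (A : Matrix (Fin n) (Fin N) (ZMod 2))
    (hinj : Function.Injective (fun j : Fin N => fun m => A m j))
    (hnz : ∀ j : Fin N, (fun m => A m j) ≠ 0)
    (B : Fin N → Fin N → ℤ)
    (hBind : LinearIndependent ℤ B)
    (hBspan : Submodule.span ℤ (Set.range B) =
      Submodule.span ℤ
        {d : Fin N → ℤ | ∃ x x', d = fun j => pauliK n N A x j - pauliK n N A x' j}) :
    ((2 : ℝ) ^ n ≤ (2 : ℝ) ^ N ∧
      (2 : ℝ) ^ N ≤ (|(Matrix.of B).det| : ℝ) ∧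
      (|(Matrix.of B).det| : ℝ) ≤ ((N : ℝ) + 1) ^ (((N : ℝ) + 1) / 2) ∧
      ((N : ℝ) + 1) ^ (((N : ℝ) + 1) / 2) ≤ ((2 : ℝ) ^ n) ^ (2 ^ (n - 1))) ∧
    ((|(Matrix.of B).det| : ℝ) = (2 : ℝ) ^ N ↔ N = n ∧ A.rank = n) ∧
    ((|(Matrix.of B).det| : ℝ) = ((2 : ℝ) ^ n) ^ (2 ^ (n - 1)) → N = 2 ^ n - 1) := by
  set W := halfRows n N A with hW
  rw [span_diff_eq] at hBspan
  have hB0 : (Matrix.of B).det ≠ 0 := by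
    intro h0
    obtain ⟨v, hv, hvB⟩ := exists_vecMul_eq_zero_iff.mpr h0
    refine hv (funext (Fintype.linearIndependent_iff.mp hBind v ?_))
    rw [← hvB]
    ext j
    simp [Matrix.vecMul, dotProduct]
  have hmem : ∀ i, B i ∈ Submodule.span ℤ (Set.range fun x => (2 : ℤ) • W x) := by
    intro i
    rw [← hBspan]
    exact Submodule.subset_span ⟨i, rfl⟩
  have hmem' := fun i => (Submodule.mem_span_range_iff_exists_fun ℤ).mp (hmem i)
  choose C hC using hmem'
  have hfac : Matrix.of B = (2 : ℤ) • (Matrix.of C * W) := by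
    ext i j
    simp only [of_apply, ← hC i, Finset.sum_apply, Pi.smul_apply, Matrix.smul_apply, smul_eq_mul,
      Matrix.mul_apply, Finset.mul_sum]
    exact Finset.sum_congr rfl fun x _ => by ring
  have hdet : (Matrix.of B).det = 2 ^ N * (Matrix.of C * W).det := by
    rw [hfac, det_smul, Fintype.card_fin]
  set d := (Matrix.of C * W).det with hd
  have hd0 : d ≠ 0 := fun h => hB0 (by rw [hdet, h, mul_zero])
  have habs : (|(Matrix.of B).det| : ℝ) = 2 ^ N * |(d : ℝ)| := by
    rw [hdet]; push_cast; rw [abs_mul, abs_of_pos (by positivity : (0 : ℝ) < 2 ^ N)]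
  have hd1 : (1 : ℝ) ≤ |(d : ℝ)| := by exact_mod_cast Int.one_le_abs hd0
  have hN1 : N + 1 ≤ 2 ^ n := by
    have := Nat.one_le_two_pow (n := n)
    omega
  have hlow : (2 : ℝ) ^ N ≤ (|(Matrix.of B).det| : ℝ) := by
    rw [habs]; exact le_mul_of_one_le_right (by positivity) hd1
  have hup : (|(Matrix.of B).det| : ℝ) ≤ ((N : ℝ) + 1) ^ (((N : ℝ) + 1) / 2) := by
    obtain ⟨f, hf⟩ := exists_det_ne_zero (fun x => (2 : ℤ) • W x) C (by
      have : (fun i => ∑ x, C i x • ((2 : ℤ) • W x)) = B := funext hC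
      rw [this]; exact hB0)
    have hdvd : (Matrix.of B).det ∣ (Matrix.of fun i => (2 : ℤ) • W (f i)).det := by
      apply det_dvd_of_mem_span_s17
      intro i
      change _ ∈ Submodule.span ℤ (Set.range B)
      rw [hBspan]
      exact Submodule.subset_span ⟨f i, rfl⟩
    have hle := Int.le_of_dvd (abs_pos.mpr hf) ((abs_dvd_abs _ _).mpr hdvd)
    have hle' : (|(Matrix.of B).det| : ℝ) ≤
        |((Matrix.of fun i => (2 : ℤ) • W (f i)).det : ℝ)| := by exact_mod_cast hle
    refine hle'.trans ((det_diff_le n N A f).trans_eq ?_)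
    rw [Real.sqrt_eq_rpow, ← Real.rpow_mul_natCast (by positivity)]
    push_cast
    congr 1
    ring
  obtain ⟨htop, hstrict⟩ := hadamard_le_top n N hn hN1
  refine ⟨⟨pow_le_pow_right₀ (by norm_num) hnN, hlow, hup, htop⟩, ⟨fun h => ?_, ?_⟩, fun h => ?_⟩
  · have hdabs : |(d : ℝ)| = 1 := by
      rw [habs] at h
      exact mul_left_cancel₀ (by positivity : (2 : ℝ) ^ N ≠ 0) (h.trans (mul_one _).symm)
    have hdu : IsUnit d := Int.isUnit_iff_abs_eq.mpr (by exact_mod_cast hdabs)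
    -- Modulo `2`, the unimodular matrix `C W` factors through `A`.
    have hmod : (Matrix.of C * W).map (Int.castRingHom (ZMod 2)) =
        (Matrix.of C).map (Int.castRingHom (ZMod 2)) *
          (Matrix.of fun x m => (bin n x m : ZMod 2)) * A := by
      rw [Matrix.map_mul, hW, halfRows_cast, codeword, Matrix.mul_assoc]
    have hunit : IsUnit ((Matrix.of C * W).map (Int.castRingHom (ZMod 2))) := by
      rw [isUnit_iff_isUnit_det, ← RingHom.mapMatrix_apply, ← RingHom.map_det]
      exact hdu.map _
    have hrank := rank_of_isUnit _ hunit
    rw [hmod, Fintype.card_fin] at hrank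
    have h1 : N ≤ A.rank := hrank.symm.trans_le (rank_mul_le_right _ A)
    have h2 : A.rank ≤ n := A.rank_le_height
    omega
  · rintro ⟨rfl, hA⟩
    refine le_antisymm ?_ hlow
    have hdvd : (Matrix.of B).det ∣ ((2 : ℤ) • (1 : Matrix (Fin N) (Fin N) ℤ)).det := by
      apply det_dvd_of_mem_span_s17
      intro i
      change _ ∈ Submodule.span ℤ (Set.range B)
      obtain ⟨x, hx⟩ := exists_halfRows_single N A hA i
      have : ((2 : ℤ) • (1 : Matrix (Fin N) (Fin N) ℤ)) i = -((2 : ℤ) • W x) := by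
        rw [hW, hx]
        ext j
        simp [Matrix.one_apply, Pi.single_apply, eq_comm]
      rw [this, hBspan]
      exact Submodule.neg_mem _ (Submodule.subset_span ⟨x, rfl⟩)
    rw [det_smul, det_one, mul_one, Fintype.card_fin] at hdvd
    have hle := Int.le_of_dvd (by positivity) ((abs_dvd _ _).mpr hdvd)
    exact_mod_cast hle
  · by_contra hne
    have := hstrict (by omega)
    linarith
end
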